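/- Fix α_un > 0 and δ ∈ (0,1). Suppose there exists an optimal occupancy d*_0 with d*_0/d^D ≤ B_{w,0} pointwise, and assumptions (A1), (A4), (A5), (A6) hold for α = α_un, and Inexact-PRO-RL satisfies the optimization-error conditions with errors ε_{o,v}, ε_{o,w}. Then with probability at least 1−δ the output π̂ of Inexact-PRO-RL with input α = α_un satisfies J(π*_0) − J(π̂) ≤ (4/(1−γ))·√(ε_stat(α_un)/(α_un·M_f)) + ε_un, where ε_un = α_un·B_{f,0} + (2/(1−γ))·√(2(ε_opt + ε_{α_un,app})/(α_un·M_f)), ε_opt = ε_{o,v} + ε_{o,w}, and ε_{α_un,app} = (B_{w,α_un}+1)·ε_{α_un,r,v} + (B_{e,α_un} + α_un·B_{f',α_un})·ε_{α_un,r,w}. -/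

import Mathlib

open MeasureTheory
open scoped BigOperators ENNReal

namespace ProRL

/-- The discrete measure on a type induced by a real-valued weight function. -/
noncomputable def discMeasure {X : Type*} [MeasurableSpace X] (p : X → ℝ) : Measure X :=
  Measure.sum fun x => ENNReal.ofReal (p x) • Measure.dirac x

variable {S A : Type*} [Fintype S] [Fintype A]

/-- The `t`-step state-action distribution of policy `π` started from `μ0`. -/
noncomputable def saDist (P : S → A → S → ℝ) (μ0 : S → ℝ) (π : S → A → ℝ) :
    ℕ → S → A → ℝ
  | 0 => fun s a => μ0 s * π s a
  | t + 1 => fun s a =>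
      (∑ s' : S, ∑ a' : A, saDist P μ0 π t s' a' * P s' a' s) * π s a

/-- The discounted state-action occupancy `d^π(s,a)`. -/
noncomputable def occ (P : S → A → S → ℝ) (μ0 : S → ℝ) (γ : ℝ) (π : S → A → ℝ)
    (s : S) (a : A) : ℝ :=
  (1 - γ) * ∑' t : ℕ, γ ^ t * saDist P μ0 π t s a

/-- The (normalized) expected discounted return `J(π) = E_{d^π}[r]`. -/
noncomputable def Jret (P : S → A → S → ℝ) (r : S → A → ℝ) (μ0 : S → ℝ) (γ : ℝ)
    (π : S → A → ℝ) : ℝ :=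
  ∑ s : S, ∑ a : A, occ P μ0 γ π s a * r s a

/-- `π` is a (stationary, stochastic) policy. -/
def IsPolicy (π : S → A → ℝ) : Prop :=
  (∀ s a, 0 ≤ π s a) ∧ ∀ s, ∑ a : A, π s a = 1

/-- The Bellman residual `e_v(s,a) = r(s,a) + γ ∑_{s'} P(s'|s,a) v(s') − v(s)`. -/
noncomputable def eV (P : S → A → S → ℝ) (r : S → A → ℝ) (γ : ℝ) (v : S → ℝ)
    (s : S) (a : A) : ℝ :=
  r s a + γ * ∑ s' : S, P s a s' * v s' - v s

/-- The population Lagrangian `L_α(v,w)`. -/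
noncomputable def Lag (P : S → A → S → ℝ) (r : S → A → ℝ) (μ0 : S → ℝ) (γ : ℝ)
    (dD : S → A → ℝ) (f : ℝ → ℝ) (α : ℝ) (v : S → ℝ) (w : S → A → ℝ) : ℝ :=
  (1 - γ) * ∑ s : S, μ0 s * v s
    - α * ∑ s : S, ∑ a : A, dD s a * f (w s a)
    + ∑ s : S, ∑ a : A, dD s a * (w s a * eV P r γ v s a)

/-- The empirical Lagrangian `L̂_α(v,w)` built from the transition dataset `D`
(`D i = ((sᵢ,aᵢ), s'ᵢ)`, with `rᵢ = r sᵢ aᵢ`) and initial-state dataset `D0`. -/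
noncomputable def empLag (r : S → A → ℝ) (γ : ℝ) (f : ℝ → ℝ) (α : ℝ) {n n0 : ℕ}
    (D : Fin n → (S × A) × S) (D0 : Fin n0 → S) (v : S → ℝ) (w : S → A → ℝ) : ℝ :=
  (1 - γ) * ((n0 : ℝ)⁻¹ * ∑ j : Fin n0, v (D0 j))
    - α * ((n : ℝ)⁻¹ * ∑ i : Fin n, f (w (D i).1.1 (D i).1.2))
    + (n : ℝ)⁻¹ * ∑ i : Fin n,
        w (D i).1.1 (D i).1.2 *
          (r (D i).1.1 (D i).1.2 + γ * v (D i).2 - v (D i).1.1)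

/-- Per-state normalization of a state-action weight into a policy
(uniform where the state marginal is not positive). -/
noncomputable def normPolicy (d : S → A → ℝ) (s : S) (a : A) : ℝ :=
  if 0 < ∑ a' : A, d s a' then d s a / ∑ a' : A, d s a'
  else (Fintype.card A : ℝ)⁻¹

/-- Policy extraction from a density ratio `w` and a behavior policy `piD`
(uniform where the normalizer vanishes). -/
noncomputable def extractPolicy (piD w : S → A → ℝ) (s : S) (a : A) : ℝ :=
  if 0 < ∑ a' : A, w s a' * piD s a' then
    w s a * piD s a / ∑ a' : A, w s a' * piD s a'
  else (Fintype.card A : ℝ)⁻¹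

/-- Behavior policy `π_D(a|s)` obtained from the data distribution `d^D`. -/
noncomputable def behPolicy (dD : S → A → ℝ) : S → A → ℝ := normPolicy dD

/-- The state-action measure `d(s,a) = w(s,a)·d^D(s,a)`. -/
noncomputable def dstar (dD w : S → A → ℝ) : S → A → ℝ := fun s a => w s a * dD s a

/-- The weighted `L²(d^D)` norm of a state-action function. -/
noncomputable def l2nrm (dD g : S → A → ℝ) : ℝ :=
  Real.sqrt (∑ s : S, ∑ a : A, dD s a * g s a ^ 2)

/-- `‖π(·|s) − π'(·|s)‖₁`. -/
noncomputable def l1Pol (π π' : S → A → ℝ) (s : S) : ℝ := ∑ a : A, |π s a - π' s a|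

/-- `E_{s ∼ d}[‖π(·|s) − π'(·|s)‖₁]` where `d` is a state-action distribution. -/
noncomputable def expL1 (d π π' : S → A → ℝ) : ℝ :=
  ∑ s : S, (∑ a : A, d s a) * l1Pol π π' s

/-- The statistical error term `ε_stat`. -/
noncomputable def epsStat (γ α Bv Bf Bw Be δ : ℝ) (nV nW n n0 : ℕ) : ℝ :=
  (1 - γ) * Bv * Real.sqrt (2 * Real.log (4 * (nV : ℝ) / δ) / (n0 : ℝ))
    + (α * Bf + Bw * Be) *
        Real.sqrt (2 * Real.log (4 * ((nV : ℝ) * (nW : ℝ)) / δ) / (n : ℝ))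

/-- The Bellman flow equations for a state-action measure `d`. -/
def BellmanFlow (P : S → A → S → ℝ) (μ0 : S → ℝ) (γ : ℝ) (d : S → A → ℝ) : Prop :=
  ∀ s : S, ∑ a : A, d s a
    = (1 - γ) * μ0 s + γ * ∑ s' : S, ∑ a' : A, P s' a' s * d s' a'

/-- `(v,w)` is a saddle point of `max_{w ≥ 0} min_v L_α(v,w)`. -/
def IsSaddle (P : S → A → S → ℝ) (r : S → A → ℝ) (μ0 : S → ℝ) (γ : ℝ)
    (dD : S → A → ℝ) (f : ℝ → ℝ) (α : ℝ) (v : S → ℝ) (w : S → A → ℝ) : Prop :=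
  (∀ s a, 0 ≤ w s a) ∧
  (∀ v' : S → ℝ, Lag P r μ0 γ dD f α v w ≤ Lag P r μ0 γ dD f α v' w) ∧
  (∀ w' : S → A → ℝ, (∀ s a, 0 ≤ w' s a) →
    Lag P r μ0 γ dD f α v w' ≤ Lag P r μ0 γ dD f α v w)

/-- `(v,w)` is a saddle point of `max_{0 ≤ w ≤ Bw} min_v L_α(v,w)` (constrained LP). -/
def IsSaddleB (P : S → A → S → ℝ) (r : S → A → ℝ) (μ0 : S → ℝ) (γ : ℝ)
    (dD : S → A → ℝ) (f : ℝ → ℝ) (α Bw : ℝ) (v : S → ℝ) (w : S → A → ℝ) : Prop :=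
  (∀ s a, 0 ≤ w s a ∧ w s a ≤ Bw) ∧
  (∀ v' : S → ℝ, Lag P r μ0 γ dD f α v w ≤ Lag P r μ0 γ dD f α v' w) ∧
  (∀ w' : S → A → ℝ, (∀ s a, 0 ≤ w' s a ∧ w' s a ≤ Bw) →
    Lag P r μ0 γ dD f α v w' ≤ Lag P r μ0 γ dD f α v w)

/-- `(vhat, what)` is an exact max-min point of the empirical Lagrangian over `V × W`:
`vhat ∈ argmin_{v ∈ V} L̂(v, what)` and `what ∈ argmax_{w ∈ W} min_{v ∈ V} L̂(v, w)`. -/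
def IsProRLOutput (r : S → A → ℝ) (γ : ℝ) (f : ℝ → ℝ) (α : ℝ)
    (V : Finset (S → ℝ)) (W : Finset (S → A → ℝ)) {n n0 : ℕ}
    (D : Fin n → (S × A) × S) (D0 : Fin n0 → S)
    (vhat : S → ℝ) (what : S → A → ℝ) : Prop :=
  vhat ∈ V ∧ what ∈ W ∧
  (∀ v ∈ V, empLag r γ f α D D0 vhat what ≤ empLag r γ f α D D0 v what) ∧
  ∀ w ∈ W, ∀ vw ∈ V,
    (∀ v ∈ V, empLag r γ f α D D0 vw w ≤ empLag r γ f α D D0 v w) →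
      empLag r γ f α D D0 vw w ≤ empLag r γ f α D D0 vhat what

/-- Weight of a transition tuple `((s,a),s')` under `(s,a) ∼ d^D`, `s' ∼ P(·|s,a)`. -/
noncomputable def tupleWeight (P : S → A → S → ℝ) (dD : S → A → ℝ)
    (x : (S × A) × S) : ℝ :=
  dD x.1.1 x.1.2 * P x.1.1 x.1.2 x.2

/-- The joint law of the transition dataset `D` (i.i.d. from `d^D ⊗ P`) and the
initial-state dataset `D0` (i.i.d. from `μ0`). -/
noncomputable def dataMeasure [MeasurableSpace S] [MeasurableSpace A]
    (P : S → A → S → ℝ) (dD : S → A → ℝ) (μ0 : S → ℝ) (n n0 : ℕ) :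
    Measure ((Fin n → (S × A) × S) × (Fin n0 → S)) :=
  (Measure.pi fun _ : Fin n => discMeasure (tupleWeight P dD)).prod
    (Measure.pi fun _ : Fin n0 => discMeasure μ0)

/-- The joint law of datasets `D1`, `D2` (both i.i.d. from `d^D ⊗ P`) and `D0`
(i.i.d. from `μ0`), used by PRO-RL-BC. -/
noncomputable def dataMeasure3 [MeasurableSpace S] [MeasurableSpace A]
    (P : S → A → S → ℝ) (dD : S → A → ℝ) (μ0 : S → ℝ) (n1 n2 n0 : ℕ) :
    Measure ((Fin n1 → (S × A) × S) × (Fin n2 → (S × A) × S) × (Fin n0 → S)) :=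
  (Measure.pi fun _ : Fin n1 => discMeasure (tupleWeight P dD)).prod
    ((Measure.pi fun _ : Fin n2 => discMeasure (tupleWeight P dD)).prod
      (Measure.pi fun _ : Fin n0 => discMeasure μ0))

/-- `v` is the optimal value function: it satisfies the Bellman optimality equation. -/
def IsOptValue [Nonempty A] (P : S → A → S → ℝ) (r : S → A → ℝ) (γ : ℝ)
    (v : S → ℝ) : Prop :=
  ∀ s : S, v s = Finset.univ.sup' Finset.univ_nonempty
    (fun a : A => r s a + γ * ∑ s' : S, P s a s' * v s')

/-- Basic assumptions on the MDP, the regularizer-free data, and the data distribution. -/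
structure MDPAssumptions (P : S → A → S → ℝ) (r : S → A → ℝ) (μ0 : S → ℝ) (γ : ℝ)
    (dD : S → A → ℝ) : Prop where
  P_nonneg : ∀ s a s', 0 ≤ P s a s'
  P_sum : ∀ s a, ∑ s' : S, P s a s' = 1
  r_nonneg : ∀ s a, 0 ≤ r s a
  r_le_one : ∀ s a, r s a ≤ 1
  γ_nonneg : 0 ≤ γ
  γ_lt_one : γ < 1
  μ0_pos : ∀ s, 0 < μ0 s
  μ0_sum : ∑ s : S, μ0 s = 1
  dD_nonneg : ∀ s a, 0 ≤ dD s a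
  dD_sum : ∑ s : S, ∑ a : A, dD s a = 1

/-- Regularity of the regularizer `f`: continuously differentiable with derivative `f'`,
`M_f`-strongly convex, and with `|f'| ≤ Bf'`, `|f| ≤ Bf` on `[0, Bw]`. -/
structure RegAssumptions (f f' : ℝ → ℝ) (Mf Bw Bf' Bf : ℝ) : Prop where
  deriv : ∀ x, HasDerivAt f (f' x) x
  strong : StrongConvexOn Set.univ Mf f
  Mf_pos : 0 < Mf
  f'_bdd : ∀ x, 0 ≤ x → x ≤ Bw → |f' x| ≤ Bf'
  f_bdd : ∀ x, 0 ≤ x → x ≤ Bw → |f x| ≤ Bf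

/-- `w` is an optimal density ratio of the unregularized LP (the set `W*₀`). -/
def OptRatio (P : S → A → S → ℝ) (r : S → A → ℝ) (μ0 : S → ℝ) (γ : ℝ)
    (dD : S → A → ℝ) (w : S → A → ℝ) : Prop :=
  (∀ s a, 0 ≤ w s a) ∧ BellmanFlow P μ0 γ (dstar dD w) ∧
  ∀ w' : S → A → ℝ, (∀ s a, 0 ≤ w' s a) → BellmanFlow P μ0 γ (dstar dD w') →
    ∑ s : S, ∑ a : A, dstar dD w' s a * r s a
      ≤ ∑ s : S, ∑ a : A, dstar dD w s a * r s a

/-!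
By Hoeffding's inequality and a union bound over `V × W`, the empirical Lagrangian is uniformly
`ε_stat`-close to `L_α` with probability at least `1 - δ`. On that event, replacing the saddle point
by its best approximations in `V` and `W` shows that the approximate max-min output `ŵ` satisfies
`L_α(v*, w*) - L_α(v*, ŵ) ≤ 2 ε_stat + ε_opt + ε_app`. Strong convexity of `f` makes `L_α(v*, ·)`
grow quadratically away from its maximizer `w*`, so this gap bounds `‖w* - ŵ‖²` in `L²(d^D)`.
The occupancy of the extracted policy then differs from `d* = w* d^D` by at most
`2 / (1 - γ)` times `‖w* - ŵ‖` in `L¹(d^D)`, because the discounted flow equation is a contraction,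
and `d*` itself is `α B_{f,0}`-optimal, because it maximizes the regularized objective.
-/

section Hoeffding

/-- The empirical mean of `g` over the sample `D`. -/
noncomputable def empMean {X : Type*} {n : ℕ} (D : Fin n → X) (g : X → ℝ) : ℝ :=
  (n : ℝ)⁻¹ * ∑ i, g (D i)

variable {X : Type*} [MeasurableSpace X] {μ : Measure X} [IsProbabilityMeasure μ]
  {g : X → ℝ} {a t δ : ℝ} {n : ℕ}

lemma measureReal_le_empMean_sub_integral (hg : AEMeasurable g μ) (hga : ∀ x, |g x| ≤ a)
    (hn : 0 < n) (ht : 0 ≤ t) :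
    (Measure.pi fun _ : Fin n => μ).real {D | t ≤ empMean D g - ∫ x, g x ∂μ}
      ≤ Real.exp (-(n * t ^ 2 / (2 * a ^ 2))) := by
  have hn' : (0 : ℝ) < n := Nat.cast_pos.mpr hn
  have hindep : ProbabilityTheory.iIndepFun
      (fun (i : Fin n) (D : Fin n → X) => g (D i) - ∫ x, g x ∂μ)
      (Measure.pi fun _ : Fin n => μ) :=
    ProbabilityTheory.iIndepFun_pi (Ω := fun _ => X) (X := fun _ x => g x - ∫ x, g x ∂μ)
      fun _ => hg.sub_const _
  have hsubG (i : Fin n) : ProbabilityTheory.HasSubgaussianMGF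
      (fun D : Fin n → X => g (D i) - ∫ x, g x ∂μ) ((‖a - -a‖₊ / 2) ^ 2)
      (Measure.pi fun _ : Fin n => μ) := by
    refine ProbabilityTheory.HasSubgaussianMGF.of_map (Y := fun D : Fin n → X => D i)
      (X := fun x => g x - ∫ x, g x ∂μ) (measurable_pi_apply i).aemeasurable ?_
    rw [(measurePreserving_eval (fun _ : Fin n => μ) i).map_eq]
    exact ProbabilityTheory.hasSubgaussianMGF_of_mem_Icc hg (ae_of_all _ fun x => abs_le.mp (hga x))
  have hchernoff := ProbabilityTheory.HasSubgaussianMGF.measure_sum_ge_le_of_iIndepFun hindep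
    (s := Finset.univ) (fun i _ => hsubG i) (ε := n * t) (by positivity)
  have hproxy : ((∑ _i : Fin n, (‖a - -a‖₊ / 2) ^ 2 : NNReal) : ℝ) = n * a ^ 2 := by
    simp [← two_mul]
  have hexponent : -(n * t) ^ 2 / (2 * (n * a ^ 2)) = -(n * t ^ 2 / (2 * a ^ 2)) := by
    rw [neg_div, mul_pow, pow_two (n : ℝ), mul_left_comm 2, mul_assoc, mul_div_mul_left _ _ hn'.ne']
  rw [hproxy, hexponent] at hchernoff
  refine (measureReal_mono fun D hD => ?_).trans hchernoff
  simp only [empMean, Set.mem_ofPred_eq] at hD ⊢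
  rw [Finset.sum_sub_distrib, Finset.sum_const, Finset.card_univ, Fintype.card_fin, nsmul_eq_mul]
  calc (n : ℝ) * t ≤ n * ((n : ℝ)⁻¹ * ∑ i, g (D i) - ∫ x, g x ∂μ) := by gcongr
    _ = ∑ i, g (D i) - n * ∫ x, g x ∂μ := by field_simp

lemma measureReal_le_abs_empMean_sub_integral (hg : AEMeasurable g μ) (hga : ∀ x, |g x| ≤ a)
    (hn : 0 < n) (ht : 0 ≤ t) :
    (Measure.pi fun _ : Fin n => μ).real {D | t ≤ |empMean D g - ∫ x, g x ∂μ|}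
      ≤ 2 * Real.exp (-(n * t ^ 2 / (2 * a ^ 2))) := by
  have hupper := measureReal_le_empMean_sub_integral hg hga hn ht
  have hlower := measureReal_le_empMean_sub_integral (μ := μ) (g := -g) hg.neg
    (fun x => (abs_neg (g x)).trans_le (hga x)) hn ht
  rw [two_mul]
  refine (measureReal_mono fun D hD => ?_).trans
    ((measureReal_union_le _ _).trans (add_le_add hupper hlower))
  have hneg : empMean D (-g) - ∫ x, (-g) x ∂μ = -(empMean D g - ∫ x, g x ∂μ) := by
    simp only [empMean, Pi.neg_apply, Finset.sum_neg_distrib, integral_neg]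
    ring
  simpa only [Set.mem_union, Set.mem_ofPred_eq, hneg] using le_abs.mp hD

lemma measure_lt_abs_empMean_sub_integral_le (hg : AEMeasurable g μ) (hga : ∀ x, |g x| ≤ a)
    (hn : 0 < n) (hδ : 0 < δ) :
    (Measure.pi fun _ : Fin n => μ)
        {D | a * √(2 * Real.log (2 / δ) / n) < |empMean D g - ∫ x, g x ∂μ|}
      ≤ ENNReal.ofReal δ := by
  obtain hδ1 | hδ1 := le_or_gt 1 δ
  · exact prob_le_one.trans (ENNReal.one_le_ofReal.mpr hδ1)
  obtain ⟨x⟩ := nonempty_of_isProbabilityMeasure μ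
  obtain rfl | ha := ((abs_nonneg _).trans (hga x)).eq_or_lt
  · have hg0 (x : X) : g x = 0 := abs_nonpos_iff.mp (hga x)
    simp [empMean, hg0]
  have hlog : 0 < Real.log (2 / δ) := Real.log_pos ((one_lt_div hδ).mpr (by linarith))
  have hexp : 2 * Real.exp (-(n * (a * √(2 * Real.log (2 / δ) / n)) ^ 2 / (2 * a ^ 2))) = δ := by
    rw [mul_pow, Real.sq_sqrt (by positivity)]
    field_simp
    rw [Real.exp_neg, Real.exp_log (by positivity), inv_div, mul_div_cancel₀ _ two_ne_zero]
  have htail := measureReal_le_abs_empMean_sub_integral hg hga hn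
    (t := a * √(2 * Real.log (2 / δ) / n)) (by positivity)
  rw [hexp] at htail
  refine (measure_mono (Set.ofPred_subset_ofPred.mpr fun D hD => hD.le)).trans ?_
  exact (ENNReal.le_ofReal_iff_toReal_le (measure_ne_top _ _) hδ.le).mpr htail

lemma measure_exists_lt_abs_empMean_sub_integral_le {J : Type*} {F : Finset J} {g : J → X → ℝ}
    (hg : ∀ j ∈ F, AEMeasurable (g j) μ) (hga : ∀ j ∈ F, ∀ x, |g j x| ≤ a)
    (hn : 0 < n) (hδ : 0 < δ) :
    (Measure.pi fun _ : Fin n => μ) {D | ∃ j ∈ F,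
        a * √(2 * Real.log (2 * F.card / δ) / n) < |empMean D (g j) - ∫ x, g j x ∂μ|}
      ≤ ENNReal.ofReal δ := by
  obtain rfl | hF := F.eq_empty_or_nonempty
  · simp
  have hcard : (0 : ℝ) < F.card := Nat.cast_pos.mpr hF.card_pos
  have hsingle (j : J) (hj : j ∈ F) := measure_lt_abs_empMean_sub_integral_le
    (hg j hj) (hga j hj) hn (div_pos hδ hcard)
  simp only [div_div_eq_mul_div] at hsingle
  have hunion : {D : Fin n → X | ∃ j ∈ F,
      a * √(2 * Real.log (2 * F.card / δ) / n) < |empMean D (g j) - ∫ x, g j x ∂μ|}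
      = ⋃ j ∈ F, {D | a * √(2 * Real.log (2 * F.card / δ) / n)
        < |empMean D (g j) - ∫ x, g j x ∂μ|} := by
    ext D
    simp
  calc _ ≤ ∑ j ∈ F, (Measure.pi fun _ : Fin n => μ)
          {D | a * √(2 * Real.log (2 * F.card / δ) / n)
            < |empMean D (g j) - ∫ x, g j x ∂μ|} := hunion ▸ measure_biUnion_finset_le F _
    _ ≤ ∑ _j ∈ F, ENNReal.ofReal (δ / F.card) := Finset.sum_le_sum hsingle
    _ = ENNReal.ofReal δ := by
      rw [Finset.sum_const, ← ENNReal.ofReal_nsmul, nsmul_eq_mul, mul_div_cancel₀ _ hcard.ne']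

end Hoeffding

section DiscreteMeasure

variable {X : Type*} [Fintype X] [MeasurableSpace X] {p : X → ℝ}

lemma isProbabilityMeasure_discMeasure (hp : p ∈ stdSimplex ℝ X) :
    IsProbabilityMeasure (discMeasure p) where
  measure_univ := by
    simp only [discMeasure, Measure.sum_fintype, Measure.finsetSum_apply, Measure.smul_apply,
      measure_univ, smul_eq_mul, mul_one]
    rw [← ENNReal.ofReal_sum_of_nonneg fun x _ => hp.1 x, hp.2, ENNReal.ofReal_one]

lemma integral_discMeasure [MeasurableSingletonClass X] (hp : ∀ x, 0 ≤ p x) (g : X → ℝ) :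
    ∫ x, g x ∂(discMeasure p) = ∑ x, p x * g x := by
  rw [discMeasure, Measure.sum_fintype,
    integral_finsetSum_measure fun x _ => (integrable_dirac (by simp)).smul_measure (by simp)]
  simp [ENNReal.toReal_ofReal, hp]

lemma discMeasure_exists_lt_abs_empMean_sub_sum_le [MeasurableSingletonClass X]
    (hp : p ∈ stdSimplex ℝ X) {J : Type*} {F : Finset J} {g : J → X → ℝ} {a δ : ℝ} {n : ℕ}
    (hga : ∀ j ∈ F, ∀ x, |g j x| ≤ a) (hn : 0 < n) (hδ : 0 < δ) :
    (Measure.pi fun _ : Fin n => discMeasure p) {D | ∃ j ∈ F,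
        a * √(2 * Real.log (2 * F.card / δ) / n) < |empMean D (g j) - ∑ x, p x * g j x|}
      ≤ ENNReal.ofReal δ := by
  have := isProbabilityMeasure_discMeasure hp
  simpa only [integral_discMeasure hp.1] using measure_exists_lt_abs_empMean_sub_integral_le
    (μ := discMeasure p) (fun j _ => (measurable_of_finite (g j)).aemeasurable) hga hn hδ

end DiscreteMeasure

section Occupancy

lemma mul_mem_stdSimplex_prod {X Y : Type*} [Fintype X] [Fintype Y] {p : X → ℝ} {κ : X → Y → ℝ}
    (hp : p ∈ stdSimplex ℝ X) (hκ : ∀ x, κ x ∈ stdSimplex ℝ Y) :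
    (fun z : X × Y => p z.1 * κ z.1 z.2) ∈ stdSimplex ℝ (X × Y) := by
  refine ⟨fun z => mul_nonneg (hp.1 z.1) ((hκ z.1).1 z.2), ?_⟩
  simp only [Fintype.sum_prod_type, ← Finset.mul_sum, (hκ _).2, mul_one, hp.2]

lemma IsPolicy.mem_stdSimplex {S A : Type*} [Fintype A] {π : S → A → ℝ} (hπ : IsPolicy π) (s : S) :
    π s ∈ stdSimplex ℝ A :=
  ⟨hπ.1 s, hπ.2 s⟩

lemma tupleWeight_mem_stdSimplex {P : S → A → S → ℝ} {dD : S → A → ℝ}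
    (hP : ∀ s a, P s a ∈ stdSimplex ℝ S) (hD : Function.uncurry dD ∈ stdSimplex ℝ (S × A)) :
    tupleWeight P dD ∈ stdSimplex ℝ ((S × A) × S) :=
  mul_mem_stdSimplex_prod hD fun x => hP x.1 x.2

/-- The next-state distribution `∑_{s',a'} d(s',a') P(s|s',a')` of a state-action measure `d`,
written `d'` in the paper. -/
noncomputable def nextDist (P : S → A → S → ℝ) (d : S → A → ℝ) (s : S) : ℝ :=
  ∑ s', ∑ a', d s' a' * P s' a' s

variable {P : S → A → S → ℝ} {r : S → A → ℝ} {μ0 : S → ℝ} {γ : ℝ} {d d₁ d₂ π : S → A → ℝ}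

lemma nextDist_sub : nextDist P (d₁ - d₂) = nextDist P d₁ - nextDist P d₂ := by
  ext s
  simp only [nextDist, Pi.sub_apply, sub_mul, Finset.sum_sub_distrib]

lemma sum_nextDist_mul (v : S → ℝ) :
    ∑ s, nextDist P d s * v s = ∑ s, ∑ a, d s a * ∑ s', P s a s' * v s' := by
  simp only [nextDist, Finset.sum_mul, Finset.mul_sum, mul_assoc]
  rw [Finset.sum_comm]
  exact Finset.sum_congr rfl fun s _ => Finset.sum_comm

lemma sum_nextDist (hP : ∀ s a, P s a ∈ stdSimplex ℝ S) :
    ∑ s, nextDist P d s = ∑ s, ∑ a, d s a := by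
  simpa only [Pi.one_apply, mul_one, (hP _ _).2] using sum_nextDist_mul (P := P) (d := d) 1

lemma abs_nextDist_le (hP : ∀ s a, P s a ∈ stdSimplex ℝ S) (s : S) :
    |nextDist P d s| ≤ nextDist P (fun s a => |d s a|) s := by
  refine (Finset.abs_sum_le_sum_abs _ _).trans (Finset.sum_le_sum fun s' _ => ?_)
  refine (Finset.abs_sum_le_sum_abs _ _).trans_eq (Finset.sum_congr rfl fun a' _ => ?_)
  rw [abs_mul, abs_of_nonneg ((hP s' a').1 s)]

lemma sum_abs_nextDist_le (hP : ∀ s a, P s a ∈ stdSimplex ℝ S) :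
    ∑ s, |nextDist P d s| ≤ ∑ s, ∑ a, |d s a| :=
  (Finset.sum_le_sum fun s _ => abs_nextDist_le hP s).trans_eq (sum_nextDist hP)

lemma nextDist_mem_stdSimplex (hP : ∀ s a, P s a ∈ stdSimplex ℝ S)
    (hd : Function.uncurry d ∈ stdSimplex ℝ (S × A)) : nextDist P d ∈ stdSimplex ℝ S := by
  refine ⟨fun s => Finset.sum_nonneg fun s' _ => Finset.sum_nonneg fun a' _ =>
    mul_nonneg (hd.1 (s', a')) ((hP s' a').1 s), ?_⟩
  rw [sum_nextDist hP, ← hd.2, Fintype.sum_prod_type]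
  rfl

lemma saDist_mem_stdSimplex (hP : ∀ s a, P s a ∈ stdSimplex ℝ S) (hμ0 : μ0 ∈ stdSimplex ℝ S)
    (hπ : IsPolicy π) (t : ℕ) :
    Function.uncurry (saDist P μ0 π t) ∈ stdSimplex ℝ (S × A) := by
  induction t with
  | zero => exact mul_mem_stdSimplex_prod hμ0 hπ.mem_stdSimplex
  | succ t ih => exact mul_mem_stdSimplex_prod (nextDist_mem_stdSimplex hP ih) hπ.mem_stdSimplex

lemma summable_pow_mul_saDist (hP : ∀ s a, P s a ∈ stdSimplex ℝ S) (hμ0 : μ0 ∈ stdSimplex ℝ S)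
    (hγ0 : 0 ≤ γ) (hγ1 : γ < 1) (hπ : IsPolicy π) (s : S) (a : A) :
    Summable fun t => γ ^ t * saDist P μ0 π t s a := by
  have hmem (t : ℕ) := mem_Icc_of_mem_stdSimplex (saDist_mem_stdSimplex hP hμ0 hπ t) (s, a)
  exact (summable_geometric_of_lt_one hγ0 hγ1).of_nonneg_of_le
    (fun t => mul_nonneg (pow_nonneg hγ0 t) (hmem t).1)
    fun t => mul_le_of_le_one_right (pow_nonneg hγ0 t) (hmem t).2

lemma occ_nonneg (hP : ∀ s a, P s a ∈ stdSimplex ℝ S) (hμ0 : μ0 ∈ stdSimplex ℝ S)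
    (hγ0 : 0 ≤ γ) (hγ1 : γ < 1) (hπ : IsPolicy π) (s : S) (a : A) : 0 ≤ occ P μ0 γ π s a :=
  mul_nonneg (sub_nonneg.mpr hγ1.le) (tsum_nonneg fun t =>
    mul_nonneg (pow_nonneg hγ0 t) ((saDist_mem_stdSimplex hP hμ0 hπ t).1 (s, a)))

lemma occ_eq (hP : ∀ s a, P s a ∈ stdSimplex ℝ S) (hμ0 : μ0 ∈ stdSimplex ℝ S)
    (hγ0 : 0 ≤ γ) (hγ1 : γ < 1) (hπ : IsPolicy π) (s : S) (a : A) :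
    occ P μ0 γ π s a = ((1 - γ) * μ0 s + γ * nextDist P (occ P μ0 γ π) s) * π s a := by
  have hsummable := summable_pow_mul_saDist hP hμ0 hγ0 hγ1 hπ
  have hstep : HasSum (fun t => γ ^ (t + 1) * saDist P μ0 π (t + 1) s a)
      (γ * nextDist P (fun s' a' => ∑' t, γ ^ t * saDist P μ0 π t s' a') s * π s a) := by
    refine (((hasSum_sum fun s' (_ : s' ∈ Finset.univ) =>
      hasSum_sum fun a' (_ : a' ∈ Finset.univ) =>
        (hsummable s' a').hasSum.mul_right (P s' a' s)).mul_left γ).mul_right (π s a)).congr_fun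
      fun t => ?_
    simp only [saDist, pow_succ, mul_assoc, ← Finset.mul_sum]
    ring
  have hscale : nextDist P (occ P μ0 γ π) s
      = (1 - γ) * nextDist P (fun s' a' => ∑' t, γ ^ t * saDist P μ0 π t s' a') s := by
    simp only [nextDist, occ, mul_assoc, Finset.mul_sum]
  rw [hscale, occ, (hsummable s a).tsum_eq_zero_add, hstep.tsum_eq, pow_zero, one_mul, saDist]
  ring

lemma bellmanFlow_iff : BellmanFlow P μ0 γ d
    ↔ ∀ s, ∑ a, d s a = (1 - γ) * μ0 s + γ * nextDist P d s := by
  simp only [BellmanFlow, nextDist, mul_comm (P _ _ _)]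

lemma bellmanFlow_occ (hP : ∀ s a, P s a ∈ stdSimplex ℝ S) (hμ0 : μ0 ∈ stdSimplex ℝ S)
    (hγ0 : 0 ≤ γ) (hγ1 : γ < 1) (hπ : IsPolicy π) : BellmanFlow P μ0 γ (occ P μ0 γ π) := by
  refine bellmanFlow_iff.mpr fun s => ?_
  rw [Finset.sum_congr rfl fun a _ => occ_eq hP hμ0 hγ0 hγ1 hπ s a, ← Finset.mul_sum, hπ.2, mul_one]

-- The difference of two flows has marginal `γ` times its own next-state distribution, so its
-- `ℓ¹` norm contracts up to the mismatch between `d` and `π`.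
lemma one_sub_mul_sum_abs_sub_occ_le (hP : ∀ s a, P s a ∈ stdSimplex ℝ S)
    (hμ0 : μ0 ∈ stdSimplex ℝ S) (hγ0 : 0 ≤ γ) (hγ1 : γ < 1) (hπ : IsPolicy π)
    (hd : BellmanFlow P μ0 γ d) :
    (1 - γ) * ∑ s, ∑ a, |d s a - occ P μ0 γ π s a|
      ≤ ∑ s, ∑ a, |d s a - (∑ a', d s a') * π s a| := by
  set x : S → A → ℝ := d - occ P μ0 γ π with hx
  have hsplit (s : S) (a : A) :
      x s a = (d s a - (∑ a', d s a') * π s a) + γ * nextDist P x s * π s a := by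
    rw [hx, nextDist_sub, Pi.sub_apply, Pi.sub_apply, Pi.sub_apply, bellmanFlow_iff.mp hd s,
      occ_eq hP hμ0 hγ0 hγ1 hπ s a]
    ring
  have hpoint (s : S) (a : A) :
      |x s a| ≤ |d s a - (∑ a', d s a') * π s a| + γ * |nextDist P x s| * π s a := by
    conv_lhs => rw [hsplit s a]
    refine (abs_add_le _ _).trans_eq ?_
    rw [abs_mul, abs_mul, abs_of_nonneg hγ0, abs_of_nonneg (hπ.1 s a)]
  have hsum : ∑ s, ∑ a, |x s a|
      ≤ ∑ s, ∑ a, |d s a - (∑ a', d s a') * π s a| + γ * ∑ s, |nextDist P x s| := by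
    refine (Finset.sum_le_sum fun s _ => Finset.sum_le_sum fun a _ => hpoint s a).trans_eq ?_
    simp only [Finset.sum_add_distrib, ← Finset.mul_sum, hπ.2, mul_one]
  have hcontract := mul_le_mul_of_nonneg_left (sum_abs_nextDist_le (d := x) hP) hγ0
  change (1 - γ) * ∑ s, ∑ a, |x s a| ≤ _
  linarith

lemma BellmanFlow.sum_mul_sub_Jret_le (hP : ∀ s a, P s a ∈ stdSimplex ℝ S)
    (hμ0 : μ0 ∈ stdSimplex ℝ S) (hγ0 : 0 ≤ γ) (hγ1 : γ < 1) (hr : ∀ s a, |r s a| ≤ 1)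
    (hπ : IsPolicy π) (hd : BellmanFlow P μ0 γ d) :
    ∑ s, ∑ a, d s a * r s a - Jret P r μ0 γ π
      ≤ (∑ s, ∑ a, |d s a - (∑ a', d s a') * π s a|) / (1 - γ) := by
  rw [le_div_iff₀' (sub_pos.mpr hγ1)]
  refine le_trans ?_ (one_sub_mul_sum_abs_sub_occ_le hP hμ0 hγ0 hγ1 hπ hd)
  refine mul_le_mul_of_nonneg_left ?_ (sub_pos.mpr hγ1).le
  simp only [Jret, ← Finset.sum_sub_distrib, ← sub_mul]
  refine Finset.sum_le_sum fun s _ => Finset.sum_le_sum fun a _ => ?_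
  calc (d s a - occ P μ0 γ π s a) * r s a
      ≤ |d s a - occ P μ0 γ π s a| * |r s a| := (le_abs_self _).trans_eq (abs_mul _ _)
    _ ≤ |d s a - occ P μ0 γ π s a| := mul_le_of_le_one_right (abs_nonneg _) (hr s a)

end Occupancy

section PolicyExtraction

lemma dstar_nonneg {S A : Type*} {dD w : S → A → ℝ} (hD : ∀ s a, 0 ≤ dD s a)
    (hw : ∀ s a, 0 ≤ w s a) (s : S) (a : A) : 0 ≤ dstar dD w s a :=
  mul_nonneg (hw s a) (hD s a)

variable {S A : Type*} [Fintype A] {y dD w : S → A → ℝ}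

lemma isPolicy_normPolicy [Nonempty A] (hy : ∀ s a, 0 ≤ y s a) : IsPolicy (normPolicy y) := by
  refine ⟨fun s a => ?_, fun s => ?_⟩ <;> simp only [normPolicy] <;> split_ifs with hmass
  · exact div_nonneg (hy s a) hmass.le
  · positivity
  · rw [← Finset.sum_div, div_self hmass.ne']
  · simp

lemma sum_mul_normPolicy (hy : ∀ s a, 0 ≤ y s a) (s : S) (a : A) :
    (∑ a', y s a') * normPolicy y s a = y s a := by
  obtain hmass | hmass := (Finset.sum_nonneg fun a' _ => hy s a').eq_or_lt
  · rw [← hmass, zero_mul, (Finset.sum_eq_zero_iff_of_nonneg fun a' _ => hy s a').mp hmass.symm a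
      (Finset.mem_univ a)]
  · rw [normPolicy, if_pos hmass, mul_div_cancel₀ _ hmass.ne']

lemma extractPolicy_eq_normPolicy {piD : S → A → ℝ} :
    extractPolicy piD w = normPolicy (dstar piD w) :=
  rfl

lemma isPolicy_extractPolicy_behPolicy [Nonempty A] (hD : ∀ s a, 0 ≤ dD s a)
    (hw : ∀ s a, 0 ≤ w s a) : IsPolicy (extractPolicy (behPolicy dD) w) :=
  isPolicy_normPolicy (dstar_nonneg (isPolicy_normPolicy hD).1 hw)

lemma sum_dstar_mul_extractPolicy_behPolicy [Nonempty A] (hD : ∀ s a, 0 ≤ dD s a)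
    (hw : ∀ s a, 0 ≤ w s a) (s : S) (a : A) :
    (∑ a', dstar dD w s a') * extractPolicy (behPolicy dD) w s a = dstar dD w s a := by
  have hscale (a : A) : dstar dD w s a = (∑ a', dD s a') * dstar (behPolicy dD) w s a := by
    simp only [dstar, behPolicy]
    rw [mul_left_comm, sum_mul_normPolicy hD]
  rw [Finset.sum_congr rfl fun a' _ => hscale a', ← Finset.mul_sum, mul_assoc,
    extractPolicy_eq_normPolicy, sum_mul_normPolicy
      (dstar_nonneg (dD := behPolicy dD) (isPolicy_normPolicy hD).1 hw), ← hscale]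

-- With `Y = ∑ y` and `X = ∑ x`, split `x - X q = (x - y) + (Y - X) q`.
lemma sum_abs_sub_sum_mul_le {ι : Type*} [Fintype ι] {q x y : ι → ℝ} (hq : q ∈ stdSimplex ℝ ι)
    (hy : ∀ i, (∑ j, y j) * q i = y i) :
    ∑ i, |x i - (∑ j, x j) * q i| ≤ 2 * ∑ i, |x i - y i| := by
  have hmass : |∑ j, y j - ∑ j, x j| ≤ ∑ j, |x j - y j| := by
    rw [abs_sub_comm, ← Finset.sum_sub_distrib]
    exact Finset.abs_sum_le_sum_abs _ _
  calc ∑ i, |x i - (∑ j, x j) * q i|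
      ≤ ∑ i, (|x i - y i| + |∑ j, y j - ∑ j, x j| * q i) := by
        refine Finset.sum_le_sum fun i _ => ?_
        rw [show x i - (∑ j, x j) * q i = (x i - y i) + (∑ j, y j - ∑ j, x j) * q i by
          linear_combination -hy i]
        exact (abs_add_le _ _).trans_eq (by rw [abs_mul, abs_of_nonneg (hq.1 i)])
    _ = ∑ i, |x i - y i| + |∑ j, y j - ∑ j, x j| := by
        rw [Finset.sum_add_distrib, ← Finset.mul_sum, hq.2, mul_one]
    _ ≤ 2 * ∑ i, |x i - y i| := by linarith

end PolicyExtraction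

section WeightedNorms

/-- The weighted norm `‖g‖_{1,d^D}` of a state-action function. -/
noncomputable def l1nrm (dD g : S → A → ℝ) : ℝ :=
  ∑ s, ∑ a, dD s a * |g s a|

/-- The distance `‖v - v'‖_{1,μ0} + ‖v - v'‖_{1,d^D} + ‖v - v'‖_{1,d^{D'}}` in which the paper
measures the approximation error of value functions. -/
noncomputable def valueDist (P : S → A → S → ℝ) (μ0 : S → ℝ) (dD : S → A → ℝ) (v v' : S → ℝ) : ℝ :=
  ∑ s, μ0 s * |v s - v' s| + ∑ s, (∑ a, dD s a) * |v s - v' s|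
    + ∑ s, nextDist P dD s * |v s - v' s|

variable {dD : S → A → ℝ}

lemma l2nrm_sq (hD : ∀ s a, 0 ≤ dD s a) (g : S → A → ℝ) :
    l2nrm dD g ^ 2 = ∑ s, ∑ a, dD s a * g s a ^ 2 :=
  Real.sq_sqrt (Finset.sum_nonneg fun s _ => Finset.sum_nonneg fun a _ =>
    mul_nonneg (hD s a) (sq_nonneg _))

lemma l1nrm_le_l2nrm (hD : Function.uncurry dD ∈ stdSimplex ℝ (S × A)) (g : S → A → ℝ) :
    l1nrm dD g ≤ l2nrm dD g := by
  refine Real.le_sqrt_of_sq_le ?_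
  have hCS := Finset.sum_sq_le_sum_mul_sum_of_sq_le_mul Finset.univ
    (r := fun x : S × A => dD x.1 x.2 * |g x.1 x.2|) (f := Function.uncurry dD)
    (g := fun x => dD x.1 x.2 * g x.1 x.2 ^ 2) (fun x _ => hD.1 x)
    (fun x _ => mul_nonneg (hD.1 x) (sq_nonneg _))
    (fun x _ => by rw [mul_pow, sq_abs, sq, mul_assoc]; rfl)
  rw [hD.2, one_mul, Fintype.sum_prod_type, Fintype.sum_prod_type] at hCS
  exact hCS

lemma l1nrm_sub_comm (w w' : S → A → ℝ) : l1nrm dD (w - w') = l1nrm dD (w' - w) := by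
  simp only [l1nrm, Pi.sub_apply, abs_sub_comm]

lemma sum_abs_dstar_sub_dstar (hD : ∀ s a, 0 ≤ dD s a) (w w' : S → A → ℝ) :
    ∑ s, ∑ a, |dstar dD w s a - dstar dD w' s a| = l1nrm dD (w - w') := by
  refine Finset.sum_congr rfl fun s _ => Finset.sum_congr rfl fun a _ => ?_
  rw [dstar, dstar, ← sub_mul, abs_mul, abs_of_nonneg (hD s a), mul_comm, Pi.sub_apply,
    Pi.sub_apply]

end WeightedNorms

section TemporalDifference

/-- The temporal-difference error of `v` on the transition `(s, a, s')`. -/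
def tdError (r : S → A → ℝ) (γ : ℝ) (v : S → ℝ) (s : S) (a : A) (s' : S) : ℝ :=
  r s a + γ * v s' - v s

variable {S A : Type*} {r : S → A → ℝ} {γ Bv : ℝ} {v : S → ℝ}

lemma abs_tdError_le (hr : ∀ s a, |r s a| ≤ 1)
    (hγ0 : 0 ≤ γ) (hv : ∀ s, |v s| ≤ Bv) (s : S) (a : A) (s' : S) :
    |tdError r γ v s a s'| ≤ (1 + γ) * Bv + 1 := by
  calc |tdError r γ v s a s'| ≤ |r s a| + |γ * v s'| + |v s| :=
        (abs_sub _ _).trans (add_le_add_left (abs_add_le _ _) _)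
    _ ≤ 1 + γ * Bv + Bv := by
        rw [abs_mul, abs_of_nonneg hγ0]
        gcongr
        exacts [hr s a, hv s', hv s]
    _ = (1 + γ) * Bv + 1 := by ring

variable [Fintype S] {P : S → A → S → ℝ}

lemma sum_mul_tdError (hP : ∀ s a, P s a ∈ stdSimplex ℝ S) (s : S) (a : A) :
    ∑ s', P s a s' * tdError r γ v s a s' = eV P r γ v s a := by
  simp only [tdError, eV, mul_sub, mul_add, Finset.sum_sub_distrib, Finset.sum_add_distrib,
    ← Finset.sum_mul, (hP s a).2, one_mul, mul_left_comm _ γ, ← Finset.mul_sum]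

lemma abs_eV_le (hP : ∀ s a, P s a ∈ stdSimplex ℝ S) (hr : ∀ s a, |r s a| ≤ 1) (hγ0 : 0 ≤ γ)
    (hv : ∀ s, |v s| ≤ Bv) (s : S) (a : A) : |eV P r γ v s a| ≤ (1 + γ) * Bv + 1 := by
  rw [← sum_mul_tdError hP]
  calc |∑ s', P s a s' * tdError r γ v s a s'|
      ≤ ∑ s', P s a s' * ((1 + γ) * Bv + 1) := by
        refine (Finset.abs_sum_le_sum_abs _ _).trans (Finset.sum_le_sum fun s' _ => ?_)
        rw [abs_mul, abs_of_nonneg ((hP s a).1 s')]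
        exact mul_le_mul_of_nonneg_left (abs_tdError_le hr hγ0 hv s a s') ((hP s a).1 s')
    _ = (1 + γ) * Bv + 1 := by rw [← Finset.sum_mul, (hP s a).2, one_mul]

end TemporalDifference

section Lagrangian

/-- The residual of the Bellman flow equation of `d` at `s`; it is the gradient in `v` of the
Lagrangian. -/
noncomputable def flowDefect (P : S → A → S → ℝ) (μ0 : S → ℝ) (γ : ℝ) (d : S → A → ℝ) (s : S) : ℝ :=
  (1 - γ) * μ0 s + γ * nextDist P d s - ∑ a, d s a

variable {P : S → A → S → ℝ} {r : S → A → ℝ} {μ0 : S → ℝ} {γ : ℝ} {dD : S → A → ℝ} {f : ℝ → ℝ}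
  {α Bw : ℝ} {v vst : S → ℝ} {d w w₁ w₂ wst : S → A → ℝ}

lemma Lag_eq_sum_reward_add_sum_flowDefect : Lag P r μ0 γ dD f α v w
    = ∑ s, ∑ a, dstar dD w s a * r s a - α * ∑ s, ∑ a, dD s a * f (w s a)
      + ∑ s, flowDefect P μ0 γ (dstar dD w) s * v s := by
  have heV : ∑ s, ∑ a, dD s a * (w s a * eV P r γ v s a)
      = ∑ s, ∑ a, dstar dD w s a * r s a + γ * ∑ s, nextDist P (dstar dD w) s * v s
        - ∑ s, (∑ a, dstar dD w s a) * v s := by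
    simp only [sum_nextDist_mul, Finset.sum_mul, Finset.mul_sum, ← Finset.sum_add_distrib,
      ← Finset.sum_sub_distrib]
    refine Finset.sum_congr rfl fun s _ => Finset.sum_congr rfl fun a _ => ?_
    simp only [dstar, eV, ← Finset.mul_sum]
    ring
  have hdefect : ∑ s, flowDefect P μ0 γ (dstar dD w) s * v s
      = (1 - γ) * ∑ s, μ0 s * v s + γ * ∑ s, nextDist P (dstar dD w) s * v s
        - ∑ s, (∑ a, dstar dD w s a) * v s := by
    simp only [flowDefect, sub_mul, add_mul, Finset.sum_sub_distrib, Finset.sum_add_distrib,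
      mul_assoc, Finset.mul_sum]
  rw [Lag, heV, hdefect]
  ring

lemma bellmanFlow_iff_flowDefect_eq_zero :
    BellmanFlow P μ0 γ d ↔ ∀ s, flowDefect P μ0 γ d s = 0 := by
  rw [bellmanFlow_iff]
  exact forall_congr' fun s => by rw [flowDefect, sub_eq_zero, eq_comm]

lemma Lag_eq_of_bellmanFlow (hw : BellmanFlow P μ0 γ (dstar dD w)) :
    Lag P r μ0 γ dD f α v w
      = ∑ s, ∑ a, dstar dD w s a * r s a - α * ∑ s, ∑ a, dD s a * f (w s a) := by
  simp only [Lag_eq_sum_reward_add_sum_flowDefect, bellmanFlow_iff_flowDefect_eq_zero.mp hw,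
    zero_mul, Finset.sum_const_zero, add_zero]

lemma Lag_sub_left (v₁ v₂ : S → ℝ) :
    Lag P r μ0 γ dD f α v₁ w - Lag P r μ0 γ dD f α v₂ w
      = ∑ s, flowDefect P μ0 γ (dstar dD w) s * (v₁ s - v₂ s) := by
  simp only [Lag_eq_sum_reward_add_sum_flowDefect, mul_sub, Finset.sum_sub_distrib]
  ring

lemma Lag_sub_right (w₁ w₂ : S → A → ℝ) :
    Lag P r μ0 γ dD f α v w₁ - Lag P r μ0 γ dD f α v w₂
      = ∑ s, ∑ a, dD s a *
        ((w₁ s a - w₂ s a) * eV P r γ v s a - α * (f (w₁ s a) - f (w₂ s a))) := by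
  simp only [Lag, mul_sub, sub_mul, Finset.sum_sub_distrib, mul_left_comm _ α, ← Finset.mul_sum]
  ring

lemma IsSaddle.bellmanFlow (hsad : IsSaddle P r μ0 γ dD f α vst wst) :
    BellmanFlow P μ0 γ (dstar dD wst) := by
  set ρ := flowDefect P μ0 γ (dstar dD wst) with hρ
  have hdescent : Lag P r μ0 γ dD f α vst wst - Lag P r μ0 γ dD f α (vst - ρ) wst
      = ∑ s, ρ s ^ 2 := by
    rw [Lag_sub_left]
    exact Finset.sum_congr rfl fun s _ => by rw [Pi.sub_apply, sub_sub_cancel, ← hρ, sq]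
  have hle : ∑ s, ρ s ^ 2 ≤ 0 := hdescent ▸ sub_nonpos.mpr (hsad.2.1 (vst - ρ))
  have hzero := (Finset.sum_eq_zero_iff_of_nonneg fun s _ => sq_nonneg (ρ s)).mp
    (hle.antisymm (Finset.sum_nonneg fun s _ => sq_nonneg (ρ s)))
  exact bellmanFlow_iff_flowDefect_eq_zero.mpr fun s =>
    pow_eq_zero_iff two_ne_zero |>.mp (hzero s (Finset.mem_univ s))

lemma abs_flowDefect_dstar_le [Nonempty A] (hP : ∀ s a, P s a ∈ stdSimplex ℝ S)
    (hμ0 : ∀ s, 0 ≤ μ0 s) (hγ0 : 0 ≤ γ) (hγ1 : γ ≤ 1) (hD : ∀ s a, 0 ≤ dD s a)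
    (hw : ∀ s a, |w s a| ≤ Bw) (s : S) :
    |flowDefect P μ0 γ (dstar dD w) s|
      ≤ (Bw + 1) * (μ0 s + ∑ a, dD s a + nextDist P dD s) := by
  have hpoint (s : S) (a : A) : |dstar dD w s a| ≤ Bw * dD s a := by
    rw [dstar, abs_mul, abs_of_nonneg (hD s a)]
    exact mul_le_mul_of_nonneg_right (hw s a) (hD s a)
  have hmass : |∑ a, dstar dD w s a| ≤ Bw * ∑ a, dD s a := by
    rw [Finset.mul_sum]
    exact (Finset.abs_sum_le_sum_abs _ _).trans (Finset.sum_le_sum fun a _ => hpoint s a)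
  have hnext : |nextDist P (dstar dD w) s| ≤ Bw * nextDist P dD s := by
    refine (abs_nextDist_le hP s).trans ?_
    simp only [nextDist, Finset.mul_sum, ← mul_assoc]
    gcongr with s' _ a' _
    exacts [(hP s' a').1 s, hpoint s' a']
  have hnext0 : 0 ≤ nextDist P dD s := Finset.sum_nonneg fun s' _ => Finset.sum_nonneg fun a' _ =>
    mul_nonneg (hD s' a') ((hP s' a').1 s)
  have hBw : 0 ≤ Bw := (abs_nonneg _).trans (hw s (Classical.arbitrary A))
  have hmass0 : 0 ≤ ∑ a, dD s a := Finset.sum_nonneg fun a _ => hD s a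
  calc |flowDefect P μ0 γ (dstar dD w) s|
      ≤ |(1 - γ) * μ0 s| + |γ * nextDist P (dstar dD w) s| + |∑ a, dstar dD w s a| :=
        (abs_sub _ _).trans (add_le_add_left (abs_add_le _ _) _)
    _ ≤ 1 * μ0 s + 1 * (Bw * nextDist P dD s) + Bw * ∑ a, dD s a := by
        rw [abs_mul, abs_mul, abs_of_nonneg (hμ0 s), abs_of_nonneg hγ0,
          abs_of_nonneg (sub_nonneg.mpr hγ1)]
        gcongr
        exacts [hμ0 s, by linarith]
    _ ≤ (Bw + 1) * (μ0 s + ∑ a, dD s a + nextDist P dD s) := by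
        nlinarith [mul_nonneg hBw (hμ0 s)]

lemma Lag_sub_left_le [Nonempty A] (hP : ∀ s a, P s a ∈ stdSimplex ℝ S) (hμ0 : ∀ s, 0 ≤ μ0 s)
    (hγ0 : 0 ≤ γ) (hγ1 : γ ≤ 1) (hD : ∀ s a, 0 ≤ dD s a) (hw : ∀ s a, |w s a| ≤ Bw)
    (v₁ v₂ : S → ℝ) :
    Lag P r μ0 γ dD f α v₁ w - Lag P r μ0 γ dD f α v₂ w
      ≤ (Bw + 1) * valueDist P μ0 dD v₁ v₂ := by
  calc Lag P r μ0 γ dD f α v₁ w - Lag P r μ0 γ dD f α v₂ w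
      ≤ ∑ s, (Bw + 1) * (μ0 s + ∑ a, dD s a + nextDist P dD s) * |v₁ s - v₂ s| := by
        rw [Lag_sub_left]
        refine Finset.sum_le_sum fun s _ => (le_abs_self _).trans ?_
        rw [abs_mul]
        gcongr
        exact abs_flowDefect_dstar_le hP hμ0 hγ0 hγ1 hD hw s
    _ = (Bw + 1) * valueDist P μ0 dD v₁ v₂ := by
        simp only [valueDist, mul_assoc, ← Finset.mul_sum, add_mul, Finset.sum_add_distrib]

lemma Lag_sub_right_le {Be Lf : ℝ} (hD : ∀ s a, 0 ≤ dD s a) (hα : 0 ≤ α)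
    (hv : ∀ s a, |eV P r γ v s a| ≤ Be)
    (hf : ∀ s a, 0 < dD s a → |f (w₁ s a) - f (w₂ s a)| ≤ Lf * |w₁ s a - w₂ s a|) :
    Lag P r μ0 γ dD f α v w₁ - Lag P r μ0 γ dD f α v w₂
      ≤ (Be + α * Lf) * l1nrm dD (w₁ - w₂) := by
  simp only [Lag_sub_right, l1nrm, Finset.mul_sum, Pi.sub_apply]
  refine Finset.sum_le_sum fun s _ => Finset.sum_le_sum fun a _ => ?_
  obtain hzero | hpos := (hD s a).eq_or_lt
  · simp only [← hzero, zero_mul, mul_zero, le_refl]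
  have hlinear : (w₁ s a - w₂ s a) * eV P r γ v s a ≤ Be * |w₁ s a - w₂ s a| := by
    refine (le_abs_self _).trans ?_
    rw [abs_mul, mul_comm]
    exact mul_le_mul_of_nonneg_right (hv s a) (abs_nonneg _)
  have hregularizer : -(α * (f (w₁ s a) - f (w₂ s a))) ≤ α * (Lf * |w₁ s a - w₂ s a|) := by
    rw [← mul_neg]
    exact mul_le_mul_of_nonneg_left ((neg_le_abs _).trans (hf s a hpos)) hα
  rw [mul_left_comm]
  exact mul_le_mul_of_nonneg_left (by linarith) (hD s a)

end Lagrangian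

section QuadraticGrowth

variable {P : S → A → S → ℝ} {r : S → A → ℝ} {μ0 : S → ℝ} {γ : ℝ} {dD : S → A → ℝ} {f : ℝ → ℝ}
  {α Mf : ℝ} {v vst : S → ℝ} {w w₁ w₂ wst : S → A → ℝ}

lemma le_Lag_add_smul (hD : ∀ s a, 0 ≤ dD s a) (hα : 0 ≤ α) (hf : StrongConvexOn (Set.Ici 0) Mf f)
    (hw₁ : ∀ s a, 0 ≤ w₁ s a) (hw₂ : ∀ s a, 0 ≤ w₂ s a) {t : ℝ} (ht0 : 0 ≤ t) (ht1 : t ≤ 1) :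
    (1 - t) * Lag P r μ0 γ dD f α v w₁ + t * Lag P r μ0 γ dD f α v w₂
        + (1 - t) * t * (α * Mf / 2 * l2nrm dD (w₁ - w₂) ^ 2)
      ≤ Lag P r μ0 γ dD f α v ((1 - t) • w₁ + t • w₂) := by
  have hf_combo (s : S) (a : A) : f (((1 - t) • w₁ + t • w₂) s a)
      ≤ (1 - t) * f (w₁ s a) + t * f (w₂ s a)
        - (1 - t) * t * (Mf / 2 * (w₁ - w₂) s a ^ 2) := by
    simpa only [smul_eq_mul, Real.norm_eq_abs, sq_abs, Pi.add_apply, Pi.smul_apply, Pi.sub_apply]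
      using hf.2 (hw₁ s a) (hw₂ s a) (sub_nonneg.mpr ht1) ht0 (sub_add_cancel 1 t)
  have hsum : ∑ s, ∑ a, dD s a * f (((1 - t) • w₁ + t • w₂) s a)
      ≤ (1 - t) * ∑ s, ∑ a, dD s a * f (w₁ s a) + t * ∑ s, ∑ a, dD s a * f (w₂ s a)
        - (1 - t) * t * (Mf / 2 * ∑ s, ∑ a, dD s a * (w₁ - w₂) s a ^ 2) := by
    simp only [Finset.mul_sum, ← Finset.sum_add_distrib, ← Finset.sum_sub_distrib]
    refine Finset.sum_le_sum fun s _ => Finset.sum_le_sum fun a _ => ?_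
    exact (mul_le_mul_of_nonneg_left (hf_combo s a) (hD s a)).trans_eq (by ring)
  have hlinear : ∑ s, ∑ a, dD s a * (((1 - t) • w₁ + t • w₂) s a * eV P r γ v s a)
      = (1 - t) * ∑ s, ∑ a, dD s a * (w₁ s a * eV P r γ v s a)
        + t * ∑ s, ∑ a, dD s a * (w₂ s a * eV P r γ v s a) := by
    simp only [Finset.mul_sum, ← Finset.sum_add_distrib, Pi.add_apply, Pi.smul_apply, smul_eq_mul]
    exact Finset.sum_congr rfl fun s _ => Finset.sum_congr rfl fun a _ => by ring
  rw [Lag, Lag, Lag, l2nrm_sq hD, hlinear]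
  linear_combination α * hsum

lemma IsSaddle.mul_l2nrm_sq_le (hsad : IsSaddle P r μ0 γ dD f α vst wst)
    (hD : ∀ s a, 0 ≤ dD s a) (hα : 0 ≤ α) (hf : StrongConvexOn (Set.Ici 0) Mf f)
    (hw : ∀ s a, 0 ≤ w s a) :
    α * Mf / 2 * l2nrm dD (wst - w) ^ 2
      ≤ Lag P r μ0 γ dD f α vst wst - Lag P r μ0 γ dD f α vst w := by
  set C := α * Mf / 2 * l2nrm dD (wst - w) ^ 2
  set G := Lag P r μ0 γ dD f α vst wst - Lag P r μ0 γ dD f α vst w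
  have hsegment : ∀ t ∈ Set.Ioo (0 : ℝ) 1, (1 - t) * C ≤ G := by
    rintro t ⟨ht0, ht1⟩
    have hcombo := le_Lag_add_smul (P := P) (r := r) (μ0 := μ0) (γ := γ) (v := vst) hD hα hf
      hsad.1 hw ht0.le ht1.le
    have hmax := hsad.2.2 ((1 - t) • wst + t • w) fun s a =>
      add_nonneg (mul_nonneg (sub_nonneg.mpr ht1.le) (hsad.1 s a)) (mul_nonneg ht0.le (hw s a))
    refine le_of_mul_le_mul_left ?_ ht0
    linear_combination hcombo + hmax
  have hlimit : Filter.Tendsto (fun t : ℝ => (1 - t) * C) (nhdsWithin 0 (Set.Ioi 0)) (nhds C) := by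
    have hcont : Continuous fun t : ℝ => (1 - t) * C := by fun_prop
    simpa only [sub_zero, one_mul] using hcont.continuousWithinAt.tendsto (x := 0)
  exact le_of_tendsto hlimit (Filter.eventually_of_mem (Ioo_mem_nhdsGT one_pos) hsegment)

end QuadraticGrowth

section RegularizationBias

variable {P : S → A → S → ℝ} {r : S → A → ℝ} {μ0 : S → ℝ} {γ : ℝ} {dD : S → A → ℝ} {f : ℝ → ℝ}
  {α Bw0 Bf0 : ℝ} {vst : S → ℝ} {d wst : S → A → ℝ}

lemma IsSaddle.sum_reward_sub_le (hsad : IsSaddle P r μ0 γ dD f α vst wst)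
    (hD : Function.uncurry dD ∈ stdSimplex ℝ (S × A)) (hα : 0 ≤ α) (hfnn : ∀ x, 0 ≤ x → 0 ≤ f x)
    (hBf0 : ∀ x, 0 ≤ x → x ≤ Bw0 → f x ≤ Bf0) (hd : BellmanFlow P μ0 γ d)
    (hd0 : ∀ s a, 0 ≤ d s a) (hcov : ∀ s a, d s a ≤ Bw0 * dD s a) :
    ∑ s, ∑ a, d s a * r s a - ∑ s, ∑ a, dstar dD wst s a * r s a ≤ α * Bf0 := by
  have hDnn (s : S) (a : A) : 0 ≤ dD s a := hD.1 (s, a)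
  set w0 : S → A → ℝ := fun s a => d s a / dD s a
  have hratio : dstar dD w0 = d := by
    funext s a
    obtain hzero | hpos := (hDnn s a).eq_or_lt
    · rw [dstar, ← hzero, mul_zero]
      exact (hd0 s a).antisymm ((hcov s a).trans_eq (by rw [← hzero, mul_zero]))
    · exact div_mul_cancel₀ _ hpos.ne'
  have hbias : ∑ s, ∑ a, dD s a * f (w0 s a) ≤ Bf0 := by
    have hpoint (s : S) (a : A) : dD s a * f (w0 s a) ≤ dD s a * Bf0 := by
      obtain hzero | hpos := (hDnn s a).eq_or_lt
      · rw [← hzero, zero_mul, zero_mul]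
      · exact mul_le_mul_of_nonneg_left (hBf0 _ (div_nonneg (hd0 s a) hpos.le)
          ((div_le_iff₀ hpos).mpr (hcov s a))) hpos.le
    calc ∑ s, ∑ a, dD s a * f (w0 s a) ≤ ∑ s, ∑ a, dD s a * Bf0 :=
          Finset.sum_le_sum fun s _ => Finset.sum_le_sum fun a _ => hpoint s a
      _ = (∑ x, Function.uncurry dD x) * Bf0 := by
          simp only [Fintype.sum_prod_type, Finset.sum_mul, Function.uncurry]
      _ = Bf0 := by rw [hD.2, one_mul]
  have hpenalty : 0 ≤ ∑ s, ∑ a, dD s a * f (wst s a) := Finset.sum_nonneg fun s _ =>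
    Finset.sum_nonneg fun a _ => mul_nonneg (hDnn s a) (hfnn _ (hsad.1 s a))
  have hmax := hsad.2.2 w0 fun s a => div_nonneg (hd0 s a) (hDnn s a)
  rw [Lag_eq_of_bellmanFlow hsad.bellmanFlow, Lag_eq_of_bellmanFlow (hratio ▸ hd), hratio] at hmax
  linarith [mul_le_mul_of_nonneg_left hbias hα, mul_nonneg hα hpenalty]

end RegularizationBias

section SaddleGap

lemma sub_le_of_approx_maxmin {X Y : Type*} {L Lhat : X → Y → ℝ} {V : Finset X} {W : Finset Y}
    (hV : V.Nonempty) (hW : W.Nonempty) {ε εopt εv εw c : ℝ} {v₀ vt : X} {what wt : Y}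
    (hdev : ∀ v ∈ V, ∀ w ∈ W, |Lhat v w - L v w| ≤ ε) (hwhat : what ∈ W)
    (hopt : W.sup' hW (fun w => V.inf' hV fun v => Lhat v w) - V.inf' hV (fun v => Lhat v what)
      ≤ εopt)
    (hvt : vt ∈ V) (hleft : L vt what - L v₀ what ≤ εv)
    (hwt : wt ∈ W) (hright : ∀ v ∈ V, c - L v wt ≤ εw) :
    c - L v₀ what ≤ 2 * ε + (εopt + (εv + εw)) := by
  obtain ⟨v₁, hv₁, hmin⟩ := V.exists_mem_eq_inf' hV fun v => Lhat v wt
  have hmaxmin : Lhat v₁ wt ≤ W.sup' hW fun w => V.inf' hV fun v => Lhat v w :=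
    hmin ▸ W.le_sup' (fun w => V.inf' hV fun v => Lhat v w) hwt
  have hinf : V.inf' hV (fun v => Lhat v what) ≤ Lhat vt what := V.inf'_le _ hvt
  linarith [(abs_le.mp (hdev v₁ hv₁ wt hwt)).1, (abs_le.mp (hdev vt hvt what hwhat)).2,
    hright v₁ hv₁]

end SaddleGap

section Suboptimality

variable {P : S → A → S → ℝ} {r : S → A → ℝ} {μ0 : S → ℝ} {γ : ℝ} {dD : S → A → ℝ} {f : ℝ → ℝ}
  {α Mf Bw0 Bf0 : ℝ} {vst : S → ℝ} {d w w₁ w₂ wst : S → A → ℝ}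

lemma sum_dstar_mul_sub_Jret_extractPolicy_le [Nonempty A] (hP : ∀ s a, P s a ∈ stdSimplex ℝ S)
    (hμ0 : μ0 ∈ stdSimplex ℝ S) (hγ0 : 0 ≤ γ) (hγ1 : γ < 1) (hr : ∀ s a, |r s a| ≤ 1)
    (hD : ∀ s a, 0 ≤ dD s a) (hflow : BellmanFlow P μ0 γ (dstar dD w₁))
    (hw₂ : ∀ s a, 0 ≤ w₂ s a) :
    ∑ s, ∑ a, dstar dD w₁ s a * r s a - Jret P r μ0 γ (extractPolicy (behPolicy dD) w₂)
      ≤ 2 / (1 - γ) * l1nrm dD (w₁ - w₂) := by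
  set π := extractPolicy (behPolicy dD) w₂
  have hπ : IsPolicy π := isPolicy_extractPolicy_behPolicy hD hw₂
  have hmismatch : ∑ s, ∑ a, |dstar dD w₁ s a - (∑ a', dstar dD w₁ s a') * π s a|
      ≤ 2 * l1nrm dD (w₁ - w₂) := by
    rw [← sum_abs_dstar_sub_dstar hD, Finset.mul_sum]
    exact Finset.sum_le_sum fun s _ => sum_abs_sub_sum_mul_le (hπ.mem_stdSimplex s)
      (sum_dstar_mul_extractPolicy_behPolicy hD hw₂ s)
  calc _ ≤ (∑ s, ∑ a, |dstar dD w₁ s a - (∑ a', dstar dD w₁ s a') * π s a|) / (1 - γ) :=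
        hflow.sum_mul_sub_Jret_le hP hμ0 hγ0 hγ1 hr hπ
    _ ≤ 2 * l1nrm dD (w₁ - w₂) / (1 - γ) :=
        div_le_div_of_nonneg_right hmismatch (sub_nonneg.mpr hγ1.le)
    _ = 2 / (1 - γ) * l1nrm dD (w₁ - w₂) := mul_div_right_comm _ _ _

lemma IsSaddle.l1nrm_sub_le_sqrt (hsad : IsSaddle P r μ0 γ dD f α vst wst)
    (hD : Function.uncurry dD ∈ stdSimplex ℝ (S × A)) (hα : 0 < α) (hMf : 0 < Mf)
    (hf : StrongConvexOn (Set.Ici 0) Mf f) (hw : ∀ s a, 0 ≤ w s a) :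
    l1nrm dD (wst - w)
      ≤ √(2 * (Lag P r μ0 γ dD f α vst wst - Lag P r μ0 γ dD f α vst w) / (α * Mf)) := by
  refine (l1nrm_le_l2nrm hD _).trans (Real.le_sqrt_of_sq_le ?_)
  rw [le_div_iff₀ (mul_pos hα hMf)]
  linarith [hsad.mul_l2nrm_sq_le (fun s a => hD.1 (s, a)) hα.le hf hw]

lemma IsSaddle.sum_reward_sub_Jret_extractPolicy_le [Nonempty A]
    (hsad : IsSaddle P r μ0 γ dD f α vst wst) (hP : ∀ s a, P s a ∈ stdSimplex ℝ S)
    (hμ0 : μ0 ∈ stdSimplex ℝ S) (hγ0 : 0 ≤ γ) (hγ1 : γ < 1) (hr : ∀ s a, |r s a| ≤ 1)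
    (hD : Function.uncurry dD ∈ stdSimplex ℝ (S × A)) (hα : 0 < α) (hMf : 0 < Mf)
    (hf : StrongConvexOn (Set.Ici 0) Mf f) (hfnn : ∀ x, 0 ≤ x → 0 ≤ f x)
    (hBf0 : ∀ x, 0 ≤ x → x ≤ Bw0 → f x ≤ Bf0) (hd : BellmanFlow P μ0 γ d)
    (hd0 : ∀ s a, 0 ≤ d s a) (hcov : ∀ s a, d s a ≤ Bw0 * dD s a) (hw : ∀ s a, 0 ≤ w s a) :
    ∑ s, ∑ a, d s a * r s a - Jret P r μ0 γ (extractPolicy (behPolicy dD) w)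
      ≤ α * Bf0 + 2 / (1 - γ) *
        √(2 * (Lag P r μ0 γ dD f α vst wst - Lag P r μ0 γ dD f α vst w) / (α * Mf)) := by
  have hbias := hsad.sum_reward_sub_le hD hα.le hfnn hBf0 hd hd0 hcov
  have hextract := sum_dstar_mul_sub_Jret_extractPolicy_le (dD := dD) hP hμ0 hγ0 hγ1 hr
    (fun s a => hD.1 (s, a)) hsad.bellmanFlow hw
  have hdist := mul_le_mul_of_nonneg_left (hsad.l1nrm_sub_le_sqrt hD hα hMf hf hw)
    (div_nonneg zero_le_two (sub_nonneg.mpr hγ1.le))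
  linarith

lemma sqrt_add_le_sqrt_add_sqrt (x y : ℝ) : √(x + y) ≤ √x + √y := by
  have le_sq_sqrt (z : ℝ) : z ≤ √z ^ 2 := (le_max_left z 0).trans_eq Real.sq_sqrt'.symm
  refine Real.sqrt_le_iff.mpr ⟨by positivity, ?_⟩
  nlinarith [le_sq_sqrt x, le_sq_sqrt y, mul_nonneg (Real.sqrt_nonneg x) (Real.sqrt_nonneg y)]

lemma sqrt_two_mul_two_mul_add_div_le (x y c : ℝ) :
    √(2 * (2 * x + y) / c) ≤ 2 * √(x / c) + √(2 * y / c) := by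
  have hsplit : 2 * (2 * x + y) / c = 2 ^ 2 * (x / c) + 2 * y / c := by ring
  have hfour : √(2 ^ 2 * (x / c)) = 2 * √(x / c) := by
    rw [Real.sqrt_mul (sq_nonneg _), Real.sqrt_sq zero_le_two]
  rw [hsplit, ← hfour]
  exact sqrt_add_le_sqrt_add_sqrt _ _

end Suboptimality

section UniformDeviation

variable {S A : Type*}

/-- The summand of the empirical Lagrangian contributed by a single transition. -/
noncomputable def transitionTerm (r : S → A → ℝ) (γ : ℝ) (f : ℝ → ℝ) (α : ℝ) (v : S → ℝ)
    (w : S → A → ℝ) (x : (S × A) × S) : ℝ :=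
  w x.1.1 x.1.2 * tdError r γ v x.1.1 x.1.2 x.2 - α * f (w x.1.1 x.1.2)

variable {r : S → A → ℝ} {γ : ℝ} {f : ℝ → ℝ} {α Bw Bf Bv : ℝ} {v : S → ℝ} {w : S → A → ℝ} {n n0 : ℕ}

lemma abs_transitionTerm_le (hr : ∀ s a, |r s a| ≤ 1) (hγ0 : 0 ≤ γ) (hα : 0 ≤ α)
    (hf : ∀ x, 0 ≤ x → x ≤ Bw → |f x| ≤ Bf) (hv : ∀ s, |v s| ≤ Bv)
    (hw : ∀ s a, 0 ≤ w s a ∧ w s a ≤ Bw) (x : (S × A) × S) :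
    |transitionTerm r γ f α v w x| ≤ α * Bf + Bw * ((1 + γ) * Bv + 1) := by
  obtain ⟨⟨s, a⟩, s'⟩ := x
  obtain ⟨hw0, hwB⟩ := hw s a
  calc |transitionTerm r γ f α v w ((s, a), s')|
      ≤ |w s a * tdError r γ v s a s'| + |α * f (w s a)| := abs_sub _ _
    _ = w s a * |tdError r γ v s a s'| + α * |f (w s a)| := by
        rw [abs_mul, abs_mul, abs_of_nonneg hw0, abs_of_nonneg hα]
    _ ≤ Bw * ((1 + γ) * Bv + 1) + α * Bf := by
        gcongr
        exacts [hw0.trans hwB, abs_tdError_le hr hγ0 hv s a s', hf _ hw0 hwB]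
    _ = α * Bf + Bw * ((1 + γ) * Bv + 1) := add_comm _ _

lemma empLag_eq_empMean (D : Fin n → (S × A) × S) (D0 : Fin n0 → S) :
    empLag r γ f α D D0 v w
      = (1 - γ) * empMean D0 v + empMean D (transitionTerm r γ f α v w) := by
  simp only [empLag, empMean, transitionTerm, tdError, Finset.sum_sub_distrib,
    ← Finset.mul_sum _ _ α]
  ring

variable [Fintype S] [Fintype A] {P : S → A → S → ℝ} {μ0 : S → ℝ} {dD : S → A → ℝ} {δ : ℝ}

lemma Lag_eq_sum_tupleWeight (hP : ∀ s a, P s a ∈ stdSimplex ℝ S) :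
    Lag P r μ0 γ dD f α v w = (1 - γ) * ∑ s, μ0 s * v s
      + ∑ x, tupleWeight P dD x * transitionTerm r γ f α v w x := by
  have hcond (s : S) (a : A) :
      ∑ s', tupleWeight P dD ((s, a), s') * transitionTerm r γ f α v w ((s, a), s')
        = dD s a * (w s a * eV P r γ v s a) - α * (dD s a * f (w s a)) := by
    simp only [tupleWeight, transitionTerm, mul_sub, Finset.sum_sub_distrib, ← Finset.sum_mul,
      mul_assoc, ← Finset.mul_sum, mul_left_comm (P s a _), sum_mul_tdError hP, (hP s a).2]
    ring
  simp only [Lag, Fintype.sum_prod_type, hcond, Finset.sum_sub_distrib, ← Finset.mul_sum]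
  ring

lemma abs_empLag_sub_Lag_le (hP : ∀ s a, P s a ∈ stdSimplex ℝ S) (hγ1 : γ ≤ 1) {ε₀ ε₁ : ℝ}
    {D : Fin n → (S × A) × S} {D0 : Fin n0 → S} (hinit : |empMean D0 v - ∑ s, μ0 s * v s| ≤ ε₀)
    (htrans : |empMean D (transitionTerm r γ f α v w)
      - ∑ x, tupleWeight P dD x * transitionTerm r γ f α v w x| ≤ ε₁) :
    |empLag r γ f α D D0 v w - Lag P r μ0 γ dD f α v w| ≤ (1 - γ) * ε₀ + ε₁ := by
  rw [empLag_eq_empMean, Lag_eq_sum_tupleWeight hP, add_sub_add_comm, ← mul_sub]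
  refine (abs_add_le _ _).trans (add_le_add ?_ htrans)
  rw [abs_mul, abs_of_nonneg (sub_nonneg.mpr hγ1)]
  exact mul_le_mul_of_nonneg_left hinit (sub_nonneg.mpr hγ1)

variable [MeasurableSpace S] [MeasurableSpace A]

lemma isProbabilityMeasure_dataMeasure (hP : ∀ s a, P s a ∈ stdSimplex ℝ S)
    (hμ0 : μ0 ∈ stdSimplex ℝ S) (hD : Function.uncurry dD ∈ stdSimplex ℝ (S × A)) :
    IsProbabilityMeasure (dataMeasure P dD μ0 n n0) := by
  have := isProbabilityMeasure_discMeasure hμ0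
  have := isProbabilityMeasure_discMeasure (tupleWeight_mem_stdSimplex hP hD)
  unfold dataMeasure
  infer_instance

variable [MeasurableSingletonClass S] [MeasurableSingletonClass A]

lemma dataMeasure_exists_epsStat_lt_le (hP : ∀ s a, P s a ∈ stdSimplex ℝ S)
    (hμ0 : μ0 ∈ stdSimplex ℝ S) (hD : Function.uncurry dD ∈ stdSimplex ℝ (S × A))
    (hr : ∀ s a, |r s a| ≤ 1) (hγ0 : 0 ≤ γ) (hγ1 : γ ≤ 1) (hα : 0 ≤ α) (hδ : 0 < δ)
    (hf : ∀ x, 0 ≤ x → x ≤ Bw → |f x| ≤ Bf) {V : Finset (S → ℝ)} {W : Finset (S → A → ℝ)}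
    (hV : ∀ v ∈ V, ∀ s, |v s| ≤ Bv) (hW : ∀ w ∈ W, ∀ s a, 0 ≤ w s a ∧ w s a ≤ Bw)
    (hn : 0 < n) (hn0 : 0 < n0) :
    dataMeasure P dD μ0 n n0 {ω | ∃ v ∈ V, ∃ w ∈ W,
        epsStat γ α Bv Bf Bw ((1 + γ) * Bv + 1) δ V.card W.card n n0
          < |empLag r γ f α ω.1 ω.2 v w - Lag P r μ0 γ dD f α v w|}
      ≤ ENNReal.ofReal δ := by
  have := isProbabilityMeasure_discMeasure hμ0
  have := isProbabilityMeasure_discMeasure (tupleWeight_mem_stdSimplex hP hD)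
  have hinit := discMeasure_exists_lt_abs_empMean_sub_sum_le hμ0 (g := id) hV hn0 (half_pos hδ)
  have htrans := discMeasure_exists_lt_abs_empMean_sub_sum_le (tupleWeight_mem_stdSimplex hP hD)
    (F := V ×ˢ W) (g := fun q => transitionTerm r γ f α q.1 q.2)
    (fun q hq => abs_transitionTerm_le hr hγ0 hα hf (hV _ (Finset.mem_product.mp hq).1)
      (hW _ (Finset.mem_product.mp hq).2)) hn (half_pos hδ)
  have hlevel (N : ℝ) : 2 * N / (δ / 2) = 4 * N / δ := by ring
  simp only [hlevel, Finset.card_product, Nat.cast_mul] at hinit htrans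
  set Einit : Set (Fin n0 → S) := {D0 | ∃ v ∈ V, _}
  set Etrans : Set (Fin n → (S × A) × S) := {D | ∃ q ∈ V ×ˢ W, _}
  have hmeas : dataMeasure P dD μ0 n n0 (Etrans ×ˢ Set.univ ∪ Set.univ ×ˢ Einit)
      ≤ ENNReal.ofReal δ := by
    refine (measure_union_le _ _).trans ?_
    rw [dataMeasure, Measure.prod_prod, Measure.prod_prod, measure_univ, measure_univ, one_mul,
      mul_one, ← add_halves δ, ENNReal.ofReal_add (half_pos hδ).le (half_pos hδ).le]
    exact add_le_add htrans hinit
  refine (measure_mono ?_).trans hmeas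
  rintro ω ⟨v, hv, w, hw, hlt⟩
  by_contra hgood
  simp only [Set.mem_union, Set.mem_prod, Set.mem_univ, and_true, true_and, not_or] at hgood
  obtain ⟨hgood_trans, hgood_init⟩ := hgood
  have hinit_v := not_lt.mp fun hbad => hgood_init ⟨v, hv, hbad⟩
  have htrans_vw := not_lt.mp fun hbad => hgood_trans ⟨(v, w), Finset.mk_mem_product hv hw, hbad⟩
  refine hlt.not_ge ((abs_empLag_sub_Lag_le hP hγ1 hinit_v htrans_vw).trans_eq ?_)
  rw [epsStat, mul_assoc]

lemma one_sub_le_dataMeasure_abs_empLag_sub_Lag_le (hP : ∀ s a, P s a ∈ stdSimplex ℝ S)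
    (hμ0 : μ0 ∈ stdSimplex ℝ S) (hD : Function.uncurry dD ∈ stdSimplex ℝ (S × A))
    (hr : ∀ s a, |r s a| ≤ 1) (hγ0 : 0 ≤ γ) (hγ1 : γ ≤ 1) (hα : 0 ≤ α) (hδ : 0 < δ)
    (hf : ∀ x, 0 ≤ x → x ≤ Bw → |f x| ≤ Bf) {V : Finset (S → ℝ)} {W : Finset (S → A → ℝ)}
    (hV : ∀ v ∈ V, ∀ s, |v s| ≤ Bv) (hW : ∀ w ∈ W, ∀ s a, 0 ≤ w s a ∧ w s a ≤ Bw)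
    (hn : 0 < n) (hn0 : 0 < n0) :
    1 - ENNReal.ofReal δ ≤ dataMeasure P dD μ0 n n0 {ω | ∀ v ∈ V, ∀ w ∈ W,
      |empLag r γ f α ω.1 ω.2 v w - Lag P r μ0 γ dD f α v w|
        ≤ epsStat γ α Bv Bf Bw ((1 + γ) * Bv + 1) δ V.card W.card n n0} := by
  have := isProbabilityMeasure_dataMeasure (n := n) (n0 := n0) hP hμ0 hD
  rw [tsub_le_iff_right, ← prob_add_prob_compl (μ := dataMeasure P dD μ0 n n0)
    (Set.toFinite {ω | ∀ v ∈ V, ∀ w ∈ W, _}).measurableSet]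
  gcongr
  refine (measure_mono ?_).trans
    (dataMeasure_exists_epsStat_lt_le hP hμ0 hD hr hγ0 hγ1 hα hδ hf hV hW hn hn0)
  intro ω hω
  simpa only [Set.mem_compl_iff, Set.mem_ofPred_eq, not_forall, not_le, exists_prop] using hω

end UniformDeviation

section Assumptions

variable {P : S → A → S → ℝ} {r : S → A → ℝ} {μ0 : S → ℝ} {γ : ℝ} {dD : S → A → ℝ}

lemma MDPAssumptions.P_mem_stdSimplex (hMDP : MDPAssumptions P r μ0 γ dD) (s : S) (a : A) :
    P s a ∈ stdSimplex ℝ S :=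
  ⟨hMDP.P_nonneg s a, hMDP.P_sum s a⟩

lemma MDPAssumptions.μ0_mem_stdSimplex (hMDP : MDPAssumptions P r μ0 γ dD) :
    μ0 ∈ stdSimplex ℝ S :=
  ⟨fun s => (hMDP.μ0_pos s).le, hMDP.μ0_sum⟩

lemma MDPAssumptions.uncurry_dD_mem_stdSimplex (hMDP : MDPAssumptions P r μ0 γ dD) :
    Function.uncurry dD ∈ stdSimplex ℝ (S × A) :=
  ⟨fun x => hMDP.dD_nonneg x.1 x.2, (Fintype.sum_prod_type _).trans hMDP.dD_sum⟩

lemma MDPAssumptions.abs_r_le_one (hMDP : MDPAssumptions P r μ0 γ dD) (s : S) (a : A) :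
    |r s a| ≤ 1 :=
  (abs_of_nonneg (hMDP.r_nonneg s a)).trans_le (hMDP.r_le_one s a)

lemma RegAssumptions.abs_sub_le {f f' : ℝ → ℝ} {Mf Bw Bf' Bf : ℝ}
    (hreg : RegAssumptions f f' Mf Bw Bf' Bf) {x y : ℝ} (hx : x ∈ Set.Icc 0 Bw)
    (hy : y ∈ Set.Icc 0 Bw) : |f x - f y| ≤ Bf' * |x - y| :=
  (convex_Icc 0 Bw).norm_image_sub_le_of_norm_hasDerivWithin_le
    (fun z _ => (hreg.deriv z).hasDerivWithinAt) (fun z hz => hreg.f'_bdd z hz.1 hz.2) hy hx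

end Assumptions

lemma IsSaddle.Lag_sub_Lag_le_of_approx_maxmin {S A : Type*} [Fintype S] [Fintype A] [Nonempty A]
    {P : S → A → S → ℝ} {r : S → A → ℝ} {μ0 : S → ℝ} {γ : ℝ} {dD : S → A → ℝ} {f : ℝ → ℝ}
    {α Bv Bw Lf ε εopt : ℝ} {vst : S → ℝ} {what wst : S → A → ℝ}
    {Lhat : (S → ℝ) → (S → A → ℝ) → ℝ} {V : Finset (S → ℝ)} {W : Finset (S → A → ℝ)}
    (hsad : IsSaddle P r μ0 γ dD f α vst wst) (hP : ∀ s a, P s a ∈ stdSimplex ℝ S)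
    (hμ0 : ∀ s, 0 ≤ μ0 s) (hγ0 : 0 ≤ γ) (hγ1 : γ ≤ 1) (hr : ∀ s a, |r s a| ≤ 1)
    (hD : ∀ s a, 0 ≤ dD s a) (hα : 0 ≤ α)
    (hLip : ∀ ⦃x⦄, x ∈ Set.Icc 0 Bw → ∀ ⦃y⦄, y ∈ Set.Icc 0 Bw → |f x - f y| ≤ Lf * |x - y|)
    (hcov : ∀ s a, dstar dD wst s a ≤ Bw * dD s a)
    (hVB : ∀ v ∈ V, ∀ s, |v s| ≤ Bv) (hWB : ∀ w ∈ W, ∀ s a, 0 ≤ w s a ∧ w s a ≤ Bw)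
    (hdev : ∀ v ∈ V, ∀ w ∈ W, |Lhat v w - Lag P r μ0 γ dD f α v w| ≤ ε)
    (hV : V.Nonempty) (hW : W.Nonempty) (hwhat : what ∈ W)
    (hopt : W.sup' hW (fun w => V.inf' hV fun v => Lhat v w) - V.inf' hV (fun v => Lhat v what)
      ≤ εopt) :
    Lag P r μ0 γ dD f α vst wst - Lag P r μ0 γ dD f α vst what
      ≤ 2 * ε + (εopt + ((Bw + 1) * V.inf' hV (fun v => valueDist P μ0 dD v vst)
        + ((1 + γ) * Bv + 1 + α * Lf) * W.inf' hW fun w => l1nrm dD (w - wst))) := by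
  obtain ⟨vt, hvt, hvdist⟩ := V.exists_mem_eq_inf' hV fun v => valueDist P μ0 dD v vst
  obtain ⟨wt, hwt, hwdist⟩ := W.exists_mem_eq_inf' hW fun w => l1nrm dD (w - wst)
  rw [hvdist, hwdist]
  refine sub_le_of_approx_maxmin hV hW hdev hwhat hopt hvt ?_ hwt fun v hv => ?_
  · exact Lag_sub_left_le hP hμ0 hγ0 hγ1 hD
      (fun s a => (abs_of_nonneg (hWB what hwhat s a).1).trans_le (hWB what hwhat s a).2) vt vst
  · refine (sub_le_sub_right (hsad.2.1 v) _).trans ?_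
    rw [l1nrm_sub_comm]
    exact Lag_sub_right_le hD hα (abs_eV_le hP hr hγ0 (hVB v hv)) fun s a hpos =>
      hLip ⟨hsad.1 s a, le_of_mul_le_mul_right (hcov s a) hpos⟩ (hWB wt hwt s a)

theorem stmt4_general {S A : Type*} [Fintype S] [Fintype A] [Nonempty A]
    [MeasurableSpace S] [MeasurableSpace A]
    [MeasurableSingletonClass S] [MeasurableSingletonClass A]
    {P : S → A → S → ℝ} {r : S → A → ℝ} {μ0 : S → ℝ} {γ : ℝ} {dD : S → A → ℝ} {f : ℝ → ℝ}
    {α δ Mf Bw0 Bf0 Bw Lf Bf Bv εopt : ℝ} {π0 : S → A → ℝ} {vst : S → ℝ} {wst : S → A → ℝ}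
    {V : Finset (S → ℝ)} {W : Finset (S → A → ℝ)} {n n0 : ℕ}
    {what : (Fin n → (S × A) × S) × (Fin n0 → S) → S → A → ℝ}
    (hP : ∀ s a, P s a ∈ stdSimplex ℝ S) (hμ0 : μ0 ∈ stdSimplex ℝ S)
    (hγ0 : 0 ≤ γ) (hγ1 : γ < 1) (hr : ∀ s a, |r s a| ≤ 1)
    (hD : Function.uncurry dD ∈ stdSimplex ℝ (S × A)) (hα : 0 < α) (hδ : 0 < δ)
    (hπ0 : IsPolicy π0) (hcov0 : ∀ s a, occ P μ0 γ π0 s a ≤ Bw0 * dD s a)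
    (hMf : 0 < Mf) (hf : StrongConvexOn (Set.Ici 0) Mf f) (hfnn : ∀ x, 0 ≤ x → 0 ≤ f x)
    (hBf0 : ∀ x, 0 ≤ x → x ≤ Bw0 → f x ≤ Bf0) (hBf : ∀ x, 0 ≤ x → x ≤ Bw → |f x| ≤ Bf)
    (hLip : ∀ ⦃x⦄, x ∈ Set.Icc 0 Bw → ∀ ⦃y⦄, y ∈ Set.Icc 0 Bw → |f x - f y| ≤ Lf * |x - y|)
    (hsad : IsSaddle P r μ0 γ dD f α vst wst) (hcov : ∀ s a, dstar dD wst s a ≤ Bw * dD s a)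
    (hVB : ∀ v ∈ V, ∀ s, |v s| ≤ Bv) (hWB : ∀ w ∈ W, ∀ s a, 0 ≤ w s a ∧ w s a ≤ Bw)
    (hn : 0 < n) (hn0 : 0 < n0) (hV : V.Nonempty) (hW : W.Nonempty)
    (halg : ∀ ω, what ω ∈ W ∧
      W.sup' hW (fun w => V.inf' hV fun v => empLag r γ f α ω.1 ω.2 v w)
        - V.inf' hV (fun v => empLag r γ f α ω.1 ω.2 v (what ω)) ≤ εopt) :
    1 - ENNReal.ofReal δ ≤ dataMeasure P dD μ0 n n0 {ω |
      Jret P r μ0 γ π0 - Jret P r μ0 γ (extractPolicy (behPolicy dD) (what ω))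
        ≤ 4 / (1 - γ) *
            √(epsStat γ α Bv Bf Bw ((1 + γ) * Bv + 1) δ V.card W.card n n0 / (α * Mf))
          + (α * Bf0 + 2 / (1 - γ) * √(2 * (εopt
            + ((Bw + 1) * V.inf' hV (fun v => valueDist P μ0 dD v vst)
              + ((1 + γ) * Bv + 1 + α * Lf) * W.inf' hW fun w => l1nrm dD (w - wst)))
            / (α * Mf)))} := by
  refine (one_sub_le_dataMeasure_abs_empLag_sub_Lag_le hP hμ0 hD hr hγ0 hγ1.le hα.le hδ hBf hVB hWB
    hn hn0).trans (measure_mono fun ω hdev => ?_)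
  have hgap := hsad.Lag_sub_Lag_le_of_approx_maxmin (dD := dD) hP hμ0.1 hγ0 hγ1.le hr
    (fun s a => hD.1 (s, a)) hα.le hLip hcov hVB hWB hdev hV hW (halg ω).1 (halg ω).2
  refine (hsad.sum_reward_sub_Jret_extractPolicy_le hP hμ0 hγ0 hγ1 hr hD hα hMf hf hfnn hBf0
    (bellmanFlow_occ hP hμ0 hγ0 hγ1 hπ0) (occ_nonneg hP hμ0 hγ0 hγ1 hπ0) hcov0
    fun s a => (hWB _ (halg ω).1 s a).1).trans ?_
  set ε := epsStat γ α Bv Bf Bw ((1 + γ) * Bv + 1) δ V.card W.card n n0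
  set gap := Lag P r μ0 γ dD f α vst wst - Lag P r μ0 γ dD f α vst (what ω)
  set b := εopt + _
  have hsqrt : √(2 * gap / (α * Mf)) ≤ 2 * √(ε / (α * Mf)) + √(2 * b / (α * Mf)) :=
    (Real.sqrt_le_sqrt (by gcongr)).trans (sqrt_two_mul_two_mul_add_div_le ε b (α * Mf))
  have hscaled := mul_le_mul_of_nonneg_left hsqrt (div_nonneg zero_le_two (sub_nonneg.mpr hγ1.le))
  linear_combination hscaled

/-- Corollary 2: error-robust version of Corollary 1. -/
theorem stmt4
    {S A : Type*} [Fintype S] [Fintype A] [Nonempty S] [Nonempty A]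
    [MeasurableSpace S] [MeasurableSpace A]
    [MeasurableSingletonClass S] [MeasurableSingletonClass A]
    (P : S → A → S → ℝ) (r : S → A → ℝ) (μ0 : S → ℝ) (γ : ℝ) (dD : S → A → ℝ)
    (hMDP : MDPAssumptions P r μ0 γ dD)
    (f f' : ℝ → ℝ) (αun δ : ℝ) (hα : 0 < αun) (hδ0 : 0 < δ) (hδ1 : δ < 1)
    (Mf Bw0 Bf0 Bw Bf' Bf Bv Be : ℝ)
    -- π*₀ is an optimal policy whose occupancy d*₀ is covered by the data
    (π0 : S → A → ℝ) (hπ0 : IsPolicy π0)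
    (hopt : ∀ π : S → A → ℝ, IsPolicy π → Jret P r μ0 γ π ≤ Jret P r μ0 γ π0)
    (hcov0 : ∀ s a, occ P μ0 γ π0 s a ≤ Bw0 * dD s a)
    (hBf0 : ∀ x, 0 ≤ x → x ≤ Bw0 → |f x| ≤ Bf0)
    -- (A5) etc. at α = α_un
    (hreg : RegAssumptions f f' Mf Bw Bf' Bf) (hfnn : ∀ x, 0 ≤ f x)
    (hBv : Bv = (αun * Bf' + 1) / (1 - γ)) (hBe : Be = (1 + γ) * Bv + 1)
    (vst : S → ℝ) (wst : S → A → ℝ)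
    (hsad : IsSaddle P r μ0 γ dD f αun vst wst)
    (V : Finset (S → ℝ)) (W : Finset (S → A → ℝ))
    (hV : V.Nonempty) (hW : W.Nonempty)
    (hA1 : ∀ s a, dstar dD wst s a ≤ Bw * dD s a)
    (hA4 : ∀ w ∈ W, ∀ s a, 0 ≤ w s a ∧ w s a ≤ Bw)
    (hA6 : ∀ v ∈ V, ∀ s, |v s| ≤ Bv)
    (εov εow : ℝ)
    (n n0 : ℕ) (hn : 0 < n) (hn0 : 0 < n0)
    (vhat : (Fin n → (S × A) × S) × (Fin n0 → S) → S → ℝ)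
    (what : (Fin n → (S × A) × S) × (Fin n0 → S) → S → A → ℝ)
    (halg : ∀ ω, vhat ω ∈ V ∧ what ω ∈ W ∧
      empLag r γ f αun ω.1 ω.2 (vhat ω) (what ω)
          - V.inf' hV (fun v => empLag r γ f αun ω.1 ω.2 v (what ω)) ≤ εov ∧
      W.sup' hW (fun w => V.inf' hV fun v => empLag r γ f αun ω.1 ω.2 v w)
          - V.inf' hV (fun v => empLag r γ f αun ω.1 ω.2 v (what ω)) ≤ εow) :
    1 - ENNReal.ofReal δ ≤
      dataMeasure P dD μ0 n n0 {ω |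
        Jret P r μ0 γ π0 - Jret P r μ0 γ (extractPolicy (behPolicy dD) (what ω))
          ≤ (4 / (1 - γ)) *
              Real.sqrt (epsStat γ αun Bv Bf Bw Be δ V.card W.card n n0 / (αun * Mf))
            + (αun * Bf0 + (2 / (1 - γ)) *
              Real.sqrt (2 * ((εov + εow) +
                ((Bw + 1) *
                  (V.inf' hV fun v => (∑ s : S, μ0 s * |v s - vst s|)
                    + (∑ s : S, (∑ a : A, dD s a) * |v s - vst s|)
                    + ∑ s : S, (∑ s' : S, ∑ a' : A, dD s' a' * P s' a' s) * |v s - vst s|)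
                  + (Be + αun * Bf') *
                    (W.inf' hW fun w => ∑ s : S, ∑ a : A, dD s a * |w s a - wst s a|)))
                / (αun * Mf))) } := by
  subst hBe
  refine stmt4_general (Lf := Bf') (f := f) hMDP.P_mem_stdSimplex hMDP.μ0_mem_stdSimplex
    hMDP.γ_nonneg hMDP.γ_lt_one hMDP.abs_r_le_one hMDP.uncurry_dD_mem_stdSimplex hα hδ0 hπ0 hcov0
    hreg.Mf_pos ⟨convex_Ici 0, fun x _ y _ => hreg.strong.2 trivial trivial⟩ (fun x _ => hfnn x)
    (fun x hx0 hxB => (le_abs_self _).trans (hBf0 x hx0 hxB)) hreg.f_bdd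
    (fun x hx y hy => hreg.abs_sub_le hx hy) hsad hA1 hA6 hA4 hn hn0 hV hW fun ω => ?_
  obtain ⟨hvhat, hwhat, hmin, hmaxmin⟩ := halg ω
  have hεov : 0 ≤ εov :=
    (sub_nonneg.mpr (V.inf'_le (fun v => empLag r γ f αun ω.1 ω.2 v (what ω)) hvhat)).trans hmin
  exact ⟨hwhat, hmaxmin.trans (le_add_of_nonneg_left hεov)⟩

end ProRL
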